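/- For every process P, either P ≡D seed(P), or there exists P' such that P ⤳_{seed(P)} P' and P ~ P'. -/

import Mathlib

namespace CCS

/-- Process terms over a set of actions `A`. -/
inductive Proc (A : Type) where
  | nil : Proc A
  | pre : A → Proc A → Proc A
  | par : Proc A → Proc A → Proc A
  | repl : A → Proc A → Proc A

namespace Proc

/-- Finite processes: no occurrence of replication. -/
def IsFin {A : Type} : Proc A → Prop
  | nil => True
  | pre _ p => IsFin p
  | par p q => IsFin p ∧ IsFin q
  | repl _ _ => False

/-- Processes of the calculus: replication is applied only to prefixed
finite processes, at top level. -/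
def Wf {A : Type} : Proc A → Prop
  | nil => True
  | pre _ p => IsFin p
  | par p q => Wf p ∧ Wf q
  | repl _ p => IsFin p

/-- Size: the number of prefixes. -/
def size {A : Type} : Proc A → ℕ
  | nil => 0
  | pre _ p => size p + 1
  | par p q => size p + size q
  | repl _ p => size p + 1

/-- `reps n p` is the parallel composition of `n` copies of `p`. -/
def reps {A : Type} : ℕ → Proc A → Proc A
  | 0, _ => nil
  | n+1, p => par p (reps n p)

/-- `bang F` is `!F`: for `F = α₁.F₁ | ... | αk.Fk` it is `!α₁.F₁ | ... | !αk.Fk`. -/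
def bang {A : Type} : Proc A → Proc A
  | nil => nil
  | pre a p => repl a p
  | par p q => par (bang p) (bang q)
  | repl a p => repl a p

end Proc

/-- The labelled transition system (no synchronisation). -/
inductive Step {A : Type} : Proc A → A → Proc A → Prop where
  | pre {a : A} {p : Proc A} : Step (Proc.pre a p) a p
  | repl {a : A} {p : Proc A} :
      Step (Proc.repl a p) a (Proc.par (Proc.repl a p) p)
  | parL {p : Proc A} {a : A} {p' : Proc A} (q : Proc A) :
      Step p a p' → Step (Proc.par p q) a (Proc.par p' q)
  | parR {q : Proc A} {a : A} {q' : Proc A} (p : Proc A) :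
      Step q a q' → Step (Proc.par p q) a (Proc.par p q')

/-- Strong bisimulations. -/
def IsBisim {A : Type} (R : Proc A → Proc A → Prop) : Prop :=
  Symmetric R ∧
    ∀ p q, R p q → ∀ a p', Step p a p' → ∃ q', Step q a q' ∧ R p' q'

/-- Strong bisimilarity `~`: the greatest strong bisimulation. -/
def Bisim {A : Type} (p q : Proc A) : Prop :=
  ∃ R, IsBisim R ∧ R p q

/-- The congruence `≡D`: the smallest congruence generated by the abelian
monoid laws for parallel composition (neutral element `0`) and the
distribution law `α.(F | α.F | ... | α.F) = α.F | α.F | ... | α.F`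
(with as many occurrences of `F` on both sides). -/
inductive EqD {A : Type} : Proc A → Proc A → Prop where
  | refl (p : Proc A) : EqD p p
  | symm {p q : Proc A} : EqD p q → EqD q p
  | trans {p q r : Proc A} : EqD p q → EqD q r → EqD p r
  | parComm (p q : Proc A) : EqD (Proc.par p q) (Proc.par q p)
  | parAssoc (p q r : Proc A) :
      EqD (Proc.par (Proc.par p q) r) (Proc.par p (Proc.par q r))
  | parNil (p : Proc A) : EqD (Proc.par p Proc.nil) p
  | distr (a : A) (F : Proc A) (n : ℕ) (hF : F.IsFin) :
      EqD (Proc.pre a (Proc.par F (Proc.reps n (Proc.pre a F))))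
          (Proc.reps (n + 1) (Proc.pre a F))
  | congPre (a : A) {p q : Proc A} : EqD p q → EqD (Proc.pre a p) (Proc.pre a q)
  | congPar {p p' q q' : Proc A} :
      EqD p p' → EqD q q' → EqD (Proc.par p q) (Proc.par p' q')
  | congRepl (a : A) {p q : Proc A} : EqD p q → EqD (Proc.repl a p) (Proc.repl a q)

/-- Finite (single-hole) contexts `D ::= [] | α.D | D|F`. -/
inductive FCtx (A : Type) where
  | hole : FCtx A
  | pre : A → FCtx A → FCtx A
  | par : FCtx A → Proc A → FCtx A

/-- Filling the hole of a finite context. -/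
def FCtx.fill {A : Type} : FCtx A → Proc A → Proc A
  | .hole, p => p
  | .pre a d, p => Proc.pre a (d.fill p)
  | .par d f, p => Proc.par (d.fill p) f

/-- Well-formedness of a finite context: the processes placed in parallel
are finite. -/
def FCtx.Wf {A : Type} : FCtx A → Prop
  | .hole => True
  | .pre _ d => d.Wf
  | .par d f => d.Wf ∧ f.IsFin

/-- Single-hole contexts `C ::= D | !α.D | C|P` (the hole never occurs
directly under a replication). -/
inductive Ctx (A : Type) where
  | ofD : FCtx A → Ctx A
  | repl : A → FCtx A → Ctx A
  | par : Ctx A → Proc A → Ctx A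

/-- Filling the hole of a context. -/
def Ctx.fill {A : Type} : Ctx A → Proc A → Proc A
  | .ofD d, p => d.fill p
  | .repl a d, p => Proc.repl a (d.fill p)
  | .par c q, p => Proc.par (c.fill p) q

/-- Well-formedness of a context. -/
def Ctx.Wf {A : Type} : Ctx A → Prop
  | .ofD d => d.Wf
  | .repl _ d => d.Wf
  | .par c p => c.Wf ∧ p.Wf

/-- `k` consecutive transitions. -/
inductive NSteps {A : Type} : Proc A → ℕ → Proc A → Prop where
  | zero (p : Proc A) : NSteps p 0 p
  | succ {p : Proc A} {a : A} {p' : Proc A} {k : ℕ} {q : Proc A} :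
      Step p a p' → NSteps p' k q → NSteps p (k + 1) q

/-- `P ⇒k Q`: `k` transitions from `P` reach a process `≡D Q`. -/
def Reduct {A : Type} (p : Proc A) (k : ℕ) (q : Proc A) : Prop :=
  ∃ p', NSteps p k p' ∧ EqD p' q

/-- `TopRepl S a G` holds when `!a.G` is one of the (top-level) replicated
parallel components of `S`. -/
inductive TopRepl {A : Type} : Proc A → A → Proc A → Prop where
  | repl (a : A) (p : Proc A) : TopRepl (Proc.repl a p) a p
  | parL {p : Proc A} {a : A} {r : Proc A} (q : Proc A) :
      TopRepl p a r → TopRepl (Proc.par p q) a r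
  | parR {q : Proc A} {a : A} {r : Proc A} (p : Proc A) :
      TopRepl q a r → TopRepl (Proc.par p q) a r

/-- `S` has only replicated components: `S = ∏i !αi.Si`. -/
def ReplOnly {A : Type} : Proc A → Prop
  | .nil => True
  | .pre _ _ => False
  | .par p q => ReplOnly p ∧ ReplOnly q
  | .repl _ p => p.IsFin

/-- `S ⫫ F` : for no component `!αi.Si` of `S` and no `k` do we have
`F ⇒k αi.Si`. -/
def Dis {A : Type} (S F : Proc A) : Prop :=
  ∀ a G, TopRepl S a G → ∀ k, ¬ Reduct F k (Proc.pre a G)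

/-- `S ▷ R` : there is `k > 0` with `S ⇒k S | R`. -/
def Purg {A : Type} (S R : Proc A) : Prop :=
  ∃ k, 0 < k ∧ Reduct S k (Proc.par S R)

/-- A process is a seed if no (well-formed) process of strictly smaller
size is bisimilar to it. -/
def IsSeed {A : Type} (p : Proc A) : Prop :=
  p.Wf ∧ ∀ q : Proc A, q.Wf → Bisim q p → p.size ≤ q.size

/-- The rewriting relation `⤳_T` (first argument), defined modulo `≡D` by
the axioms (B1) `C[α.F] ⤳_{!α.F|F'} C[0]` and (B2) `!α.F | !α.F | P ⤳_Q !α.F | P`. -/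
inductive Rw {A : Type} : Proc A → Proc A → Proc A → Prop where
  | B1 {a : A} {F F' : Proc A} (C : Ctx A) :
      F.IsFin → F'.Wf → C.Wf →
      Rw (Proc.par (Proc.repl a F) F') (C.fill (Proc.pre a F)) (C.fill Proc.nil)
  | B2 {a : A} {F P Q : Proc A} :
      F.IsFin → P.Wf → Q.Wf →
      Rw Q (Proc.par (Proc.repl a F) (Proc.par (Proc.repl a F) P))
           (Proc.par (Proc.repl a F) P)
  | eqD {T T' P P' Q Q' : Proc A} :
      EqD T T' → EqD P P' → Rw T' P' Q' → EqD Q Q' → Rw T P Q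

/-- `⤳*_T` : the reflexive transitive closure of `⤳_T`. -/
def RwStar {A : Type} (T : Proc A) : Proc A → Proc A → Prop :=
  Relation.ReflTransGen (Rw T)

/-- Convertibility `P ⋈ Q`: some process `T` satisfies `P ⤳*_T T` and `Q ⤳*_T T`. -/
def Convert {A : Type} (P Q : Proc A) : Prop :=
  ∃ T : Proc A, T.Wf ∧ RwStar T P T ∧ RwStar T Q T

/-- `∏i αi.Fi` for a list of prefixed components. -/
def prodPre {A : Type} (l : List (A × Proc A)) : Proc A :=
  (l.map fun x => Proc.pre x.1 x.2).foldr Proc.par Proc.nil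

/-- `∏i !αi.Fi` for a list of prefixed components. -/
def bangProd {A : Type} (l : List (A × Proc A)) : Proc A :=
  (l.map fun x => Proc.repl x.1 x.2).foldr Proc.par Proc.nil

end CCS

/-! Work in the commutative monoids of processes modulo `≡D` and modulo `~`. The classes of finite
processes modulo `~` factor uniquely into irreducibles, which makes `≡D` complete for `~` on finite
processes.

Every process is `≡D` to some `∏ !αᵢ.Hᵢ | F` with `F` finite, and the class `b` of its replicated
part depends only on the class of the process, because `b | x | y ~ b` forces `b | x ~ b`. Say that
`b` absorbs `α.H` when `b | α.H ~ b`; then `b →α b | H`. Finite processes without absorbed subterms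
can be cancelled next to `b`. Consequently, a process with no absorbed subterm `α.H` and no repeated
`!α.H` is determined, up to `≡D`, by its bisimilarity class, and it has a component `!α.H` whenever
`b` absorbs `α.H` and no subterm of `H`.

Removing an absorbed subterm or a repeated component preserves the class and decreases the size, so
seeds admit no such contraction. Hence a process `P` that admits none is `≡D` to its seed. If `P`
admits one, it is a step of `⤳_{seed(P)}`: removing a repeated component is (B2), and an innermost
absorbed subterm `α.H` of `P` occurs in the seed as `!α.H`, as (B1) requires. -/

namespace CCS

variable {A : Type}

/-! ### Bisimilarity -/

namespace Bisim

protected theorem refl (p : Proc A) : Bisim p p :=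
  ⟨Eq, ⟨fun _ _ h => h.symm, by rintro p _ rfl a p' h; exact ⟨p', h, rfl⟩⟩, rfl⟩

protected theorem symm {p q : Proc A} : Bisim p q → Bisim q p
  | ⟨R, hR, h⟩ => ⟨R, hR, hR.1 h⟩

theorem exists_step {p q p' : Proc A} {a : A} (h : Bisim p q) (hs : Step p a p') :
    ∃ q', Step q a q' ∧ Bisim p' q' := by
  obtain ⟨R, hR, h⟩ := h
  obtain ⟨q', hq, h'⟩ := hR.2 p q h a p' hs
  exact ⟨q', hq, R, hR, h'⟩

theorem of_simulations (R : Proc A → Proc A → Prop)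
    (forth : ∀ p q, R p q → ∀ a p', Step p a p' → ∃ q', Step q a q' ∧ R p' q')
    (back : ∀ p q, R p q → ∀ a q', Step q a q' → ∃ p', Step p a p' ∧ R p' q')
    {p q : Proc A} (h : R p q) : Bisim p q := by
  refine ⟨fun p q => R p q ∨ R q p, ⟨fun _ _ => Or.symm, ?_⟩, Or.inl h⟩
  rintro p q (h | h) a p' hs
  · obtain ⟨q', hq, h'⟩ := forth _ _ h _ _ hs
    exact ⟨q', hq, Or.inl h'⟩
  · obtain ⟨q', hq, h'⟩ := back _ _ h _ _ hs
    exact ⟨q', hq, Or.inr h'⟩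

protected theorem trans {p q r : Proc A} (hpq : Bisim p q) (hqr : Bisim q r) : Bisim p r := by
  refine of_simulations (fun p r => ∃ q, Bisim p q ∧ Bisim q r) ?_ ?_ ⟨q, hpq, hqr⟩
  · rintro p r ⟨q, hpq, hqr⟩ a p' hs
    obtain ⟨q', hq, hpq'⟩ := hpq.exists_step hs
    obtain ⟨r', hr, hqr'⟩ := hqr.exists_step hq
    exact ⟨r', hr, q', hpq', hqr'⟩
  · rintro p r ⟨q, hpq, hqr⟩ a r' hs
    obtain ⟨q', hq, hrq'⟩ := hqr.symm.exists_step hs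
    obtain ⟨p', hp, hqp'⟩ := hpq.symm.exists_step hq
    exact ⟨p', hp, q', hqp'.symm, hrq'.symm⟩

theorem par_congr {p p' q q' : Proc A} (hp : Bisim p p') (hq : Bisim q q') :
    Bisim (p.par q) (p'.par q') := by
  refine ⟨fun x y => ∃ p p' q q', Bisim p p' ∧ Bisim q q' ∧ x = p.par q ∧ y = p'.par q',
    ⟨?_, ?_⟩, p, p', q, q', hp, hq, rfl, rfl⟩
  · rintro _ _ ⟨p, p', q, q', hp, hq, rfl, rfl⟩
    exact ⟨p', p, q', q, hp.symm, hq.symm, rfl, rfl⟩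
  · rintro _ _ ⟨p, p', q, q', hp, hq, rfl, rfl⟩ a _ (_ | _ | ⟨_, hs⟩ | ⟨_, hs⟩)
    · obtain ⟨r, hr, h⟩ := hp.exists_step hs
      exact ⟨_, hr.parL _, _, _, _, _, h, hq, rfl, rfl⟩
    · obtain ⟨r, hr, h⟩ := hq.exists_step hs
      exact ⟨_, hr.parR _, _, _, _, _, hp, h, rfl, rfl⟩

theorem par_comm (p q : Proc A) : Bisim (p.par q) (q.par p) := by
  refine ⟨fun x y => ∃ p q : Proc A, x = p.par q ∧ y = q.par p, ⟨?_, ?_⟩, p, q, rfl, rfl⟩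
  · rintro _ _ ⟨p, q, rfl, rfl⟩
    exact ⟨q, p, rfl, rfl⟩
  · rintro _ _ ⟨p, q, rfl, rfl⟩ a _ (_ | _ | ⟨_, hs⟩ | ⟨_, hs⟩)
    · exact ⟨_, hs.parR _, _, _, rfl, rfl⟩
    · exact ⟨_, hs.parL _, _, _, rfl, rfl⟩

theorem par_assoc (p q r : Proc A) : Bisim ((p.par q).par r) (p.par (q.par r)) := by
  refine of_simulations
    (fun x y => ∃ p q r : Proc A, x = (p.par q).par r ∧ y = p.par (q.par r)) ?_ ?_
    ⟨p, q, r, rfl, rfl⟩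
  · rintro _ _ ⟨p, q, r, rfl, rfl⟩ a _ (_ | _ | ⟨_, _ | _ | ⟨_, hs⟩ | ⟨_, hs⟩⟩ | ⟨_, hs⟩)
    · exact ⟨_, hs.parL _, _, _, _, rfl, rfl⟩
    · exact ⟨_, (hs.parL _).parR _, _, _, _, rfl, rfl⟩
    · exact ⟨_, (hs.parR _).parR _, _, _, _, rfl, rfl⟩
  · rintro _ _ ⟨p, q, r, rfl, rfl⟩ a _ (_ | _ | ⟨_, hs⟩ | ⟨_, _ | _ | ⟨_, hs⟩ | ⟨_, hs⟩⟩)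
    · exact ⟨_, (hs.parL _).parL _, _, _, _, rfl, rfl⟩
    · exact ⟨_, (hs.parR _).parL _, _, _, _, rfl, rfl⟩
    · exact ⟨_, hs.parR _, _, _, _, rfl, rfl⟩

theorem par_nil (p : Proc A) : Bisim (p.par .nil) p := by
  refine of_simulations (fun x y => x = y.par .nil) ?_ ?_ rfl
  · rintro _ p rfl a _ (_ | _ | ⟨_, hs⟩ | ⟨_, ⟨⟩⟩)
    exact ⟨_, hs, rfl⟩
  · rintro _ p rfl a _ hs
    exact ⟨_, hs.parL _, rfl⟩

end Bisim

/-! ### The transition monoid of bisimilarity classes -/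

/-- Bisimilarity as an equivalence relation on processes. -/
def bisimSetoid (A : Type) : Setoid (Proc A) :=
  ⟨Bisim, Bisim.refl, Bisim.symm, Bisim.trans⟩

/-- Processes up to bisimilarity: a commutative monoid under parallel composition. -/
def BisimClass (A : Type) : Type := Quotient (bisimSetoid A)

/-- The bisimilarity class of a process. -/
def Proc.bclass (p : Proc A) : BisimClass A := Quotient.mk (bisimSetoid A) p

theorem Proc.bclass_eq_iff {p q : Proc A} : p.bclass = q.bclass ↔ Bisim p q := Quotient.eq

namespace BisimClass

theorem exists_bclass_eq (x : BisimClass A) : ∃ p : Proc A, p.bclass = x := Quotient.exists_rep x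

instance : CommMonoid (BisimClass A) where
  mul := Quotient.map₂ Proc.par fun _ _ hp _ _ hq => hp.par_congr hq
  one := Proc.nil.bclass
  mul_assoc := by rintro ⟨p⟩ ⟨q⟩ ⟨r⟩; exact Quotient.sound (Bisim.par_assoc p q r)
  mul_comm := by rintro ⟨p⟩ ⟨q⟩; exact Quotient.sound (Bisim.par_comm p q)
  mul_one := by rintro ⟨p⟩; exact Quotient.sound (Bisim.par_nil p)
  one_mul := by rintro ⟨p⟩; exact Quotient.sound ((Bisim.par_comm _ _).trans (Bisim.par_nil p))

theorem bclass_par (p q : Proc A) : (p.par q).bclass = p.bclass * q.bclass := rfl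

theorem bclass_nil : (.nil : Proc A).bclass = 1 := rfl

/-- The transition relation induced on bisimilarity classes. -/
def Step (x : BisimClass A) (a : A) (y : BisimClass A) : Prop :=
  ∃ p q : Proc A, p.bclass = x ∧ q.bclass = y ∧ CCS.Step p a q

theorem step_bclass {p : Proc A} {a : A} {y : BisimClass A} :
    p.bclass.Step a y ↔ ∃ q, CCS.Step p a q ∧ q.bclass = y := by
  constructor
  · rintro ⟨r, r', hr, rfl, hs⟩
    obtain ⟨q, hq, h⟩ := (Proc.bclass_eq_iff.1 hr).exists_step hs
    exact ⟨q, hq, (Proc.bclass_eq_iff.2 h).symm⟩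
  · rintro ⟨q, hs, rfl⟩
    exact ⟨p, q, rfl, rfl, hs⟩

theorem _root_.CCS.Step.bclass {p q : Proc A} {a : A} (h : CCS.Step p a q) :
    p.bclass.Step a q.bclass :=
  step_bclass.2 ⟨q, h, rfl⟩

theorem step_mul {x y z : BisimClass A} {a : A} :
    (x * y).Step a z ↔
      (∃ x', x.Step a x' ∧ z = x' * y) ∨ ∃ y', y.Step a y' ∧ z = x * y' := by
  obtain ⟨p, rfl⟩ := exists_bclass_eq x
  obtain ⟨q, rfl⟩ := exists_bclass_eq y
  rw [← bclass_par, step_bclass]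
  constructor
  · rintro ⟨_, _ | _ | ⟨_, hs⟩ | ⟨_, hs⟩, rfl⟩
    · exact Or.inl ⟨_, hs.bclass, rfl⟩
    · exact Or.inr ⟨_, hs.bclass, rfl⟩
  · rintro (⟨x', h, rfl⟩ | ⟨y', h, rfl⟩)
    · obtain ⟨p', hs, rfl⟩ := step_bclass.1 h
      exact ⟨_, hs.parL _, rfl⟩
    · obtain ⟨q', hs, rfl⟩ := step_bclass.1 h
      exact ⟨_, hs.parR _, rfl⟩

theorem Step.mul_right {x x' : BisimClass A} {a : A} (h : x.Step a x') (y : BisimClass A) :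
    (x * y).Step a (x' * y) :=
  step_mul.2 (Or.inl ⟨_, h, rfl⟩)

theorem Step.mul_left {y y' : BisimClass A} {a : A} (h : y.Step a y') (x : BisimClass A) :
    (x * y).Step a (x * y') :=
  step_mul.2 (Or.inr ⟨_, h, rfl⟩)

theorem not_step_one {x : BisimClass A} {a : A} : ¬ Step 1 a x := by
  rw [← bclass_nil, step_bclass]
  rintro ⟨_, ⟨⟩, -⟩

theorem step_bclass_pre {p : Proc A} {a b : A} {x : BisimClass A} :
    (Proc.pre a p).bclass.Step b x ↔ b = a ∧ x = p.bclass := by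
  rw [step_bclass]
  constructor
  · rintro ⟨_, ⟨⟩, rfl⟩
    exact ⟨rfl, rfl⟩
  · rintro ⟨rfl, rfl⟩
    exact ⟨p, .pre, rfl⟩

theorem step_bclass_repl {p : Proc A} {a b : A} {x : BisimClass A} :
    (Proc.repl a p).bclass.Step b x ↔ b = a ∧ x = (Proc.repl a p).bclass * p.bclass := by
  rw [step_bclass]
  constructor
  · rintro ⟨_, ⟨⟩, rfl⟩
    exact ⟨rfl, rfl⟩
  · rintro ⟨rfl, rfl⟩
    exact ⟨_, .repl, rfl⟩

theorem step_pow_succ {x y : BisimClass A} {a : A} {n : ℕ} :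
    (x ^ (n + 1)).Step a y ↔ ∃ x', x.Step a x' ∧ y = x' * x ^ n := by
  induction n generalizing y with
  | zero => simp
  | succ n ih =>
    rw [pow_succ, step_mul]
    constructor
    · rintro (⟨z, hz, rfl⟩ | ⟨z, hz, rfl⟩)
      · obtain ⟨w, hw, rfl⟩ := ih.1 hz
        exact ⟨w, hw, by rw [pow_succ, mul_assoc]⟩
      · exact ⟨z, hz, mul_comm _ _⟩
    · rintro ⟨z, hz, rfl⟩
      exact Or.inr ⟨z, hz, mul_comm _ _⟩

theorem eq_of_simulations (R : BisimClass A → BisimClass A → Prop)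
    (forth : ∀ x y, R x y → ∀ a x', x.Step a x' → ∃ y', y.Step a y' ∧ R x' y')
    (back : ∀ x y, R x y → ∀ a y', y.Step a y' → ∃ x', x.Step a x' ∧ R x' y')
    {x y : BisimClass A} (h : R x y) : x = y := by
  obtain ⟨p, rfl⟩ := exists_bclass_eq x
  obtain ⟨q, rfl⟩ := exists_bclass_eq y
  refine Proc.bclass_eq_iff.2 (.of_simulations (fun p q => R p.bclass q.bclass) ?_ ?_ h)
  · intro p q h a p' hs
    obtain ⟨y, hy, h'⟩ := forth _ _ h a _ hs.bclass
    obtain ⟨q', hq, rfl⟩ := step_bclass.1 hy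
    exact ⟨q', hq, h'⟩
  · intro p q h a q' hs
    obtain ⟨x, hx, h'⟩ := back _ _ h a _ hs.bclass
    obtain ⟨p', hp, rfl⟩ := step_bclass.1 hx
    exact ⟨p', hp, h'⟩

theorem ext_step {x y : BisimClass A} (h : ∀ a z, x.Step a z ↔ y.Step a z) : x = y := by
  refine eq_of_simulations (fun u v => u = v ∨ ∀ a z, u.Step a z ↔ v.Step a z) ?_ ?_ (Or.inr h)
  · rintro u v (rfl | h) a u' hs
    · exact ⟨u', hs, Or.inl rfl⟩
    · exact ⟨u', (h _ _).1 hs, Or.inl rfl⟩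
  · rintro u v (rfl | h) a v' hs
    · exact ⟨v', hs, Or.inl rfl⟩
    · exact ⟨v', (h _ _).2 hs, Or.inl rfl⟩

theorem eq_of_same_residuals {b c : BisimClass A}
    (hbc : ∀ a z, b.Step a z → ∃ k, z = b * k ∧ c.Step a (c * k))
    (hcb : ∀ a z, c.Step a z → ∃ k, z = c * k ∧ b.Step a (b * k)) : b = c := by
  refine eq_of_simulations (fun x y => ∃ z, x = b * z ∧ y = c * z) ?_ ?_ ⟨1, by simp, by simp⟩
  · rintro _ _ ⟨z, rfl, rfl⟩ a x' hs
    rcases step_mul.1 hs with ⟨w, hw, rfl⟩ | ⟨w, hw, rfl⟩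
    · obtain ⟨k, rfl, hk⟩ := hbc _ _ hw
      exact ⟨_, hk.mul_right _, k * z, mul_assoc _ _ _, mul_assoc _ _ _⟩
    · exact ⟨_, hw.mul_left _, w, rfl, rfl⟩
  · rintro _ _ ⟨z, rfl, rfl⟩ a y' hs
    rcases step_mul.1 hs with ⟨w, hw, rfl⟩ | ⟨w, hw, rfl⟩
    · obtain ⟨k, rfl, hk⟩ := hcb _ _ hw
      exact ⟨_, hk.mul_right _, k * z, mul_assoc _ _ _, mul_assoc _ _ _⟩
    · exact ⟨_, hw.mul_left _, w, rfl, rfl⟩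

theorem bclass_pre_congr (a : A) {p q : Proc A} (h : p.bclass = q.bclass) :
    (Proc.pre a p).bclass = (Proc.pre a q).bclass :=
  ext_step fun b z => by rw [step_bclass_pre, step_bclass_pre, h]

theorem bclass_repl_congr (a : A) {p q : Proc A} (h : p.bclass = q.bclass) :
    (Proc.repl a p).bclass = (Proc.repl a q).bclass := by
  refine eq_of_same_residuals ?_ ?_
  · rintro b _ hs
    obtain ⟨rfl, rfl⟩ := step_bclass_repl.1 hs
    exact ⟨_, rfl, h ▸ step_bclass_repl.2 ⟨rfl, rfl⟩⟩
  · rintro b _ hs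
    obtain ⟨rfl, rfl⟩ := step_bclass_repl.1 hs
    exact ⟨_, rfl, h ▸ step_bclass_repl.2 ⟨rfl, rfl⟩⟩

theorem bclass_reps (n : ℕ) (p : Proc A) : (Proc.reps n p).bclass = p.bclass ^ n := by
  induction n with
  | zero => rfl
  | succ n ih => rw [Proc.reps, bclass_par, ih, pow_succ']

theorem _root_.CCS.EqD.bclass_eq {p q : Proc A} (h : EqD p q) : p.bclass = q.bclass := by
  induction h with
  | refl p => rfl
  | symm _ ih => exact ih.symm
  | trans _ _ ih ih' => exact ih.trans ih'
  | parComm p q => exact mul_comm p.bclass q.bclass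
  | parAssoc p q r => exact mul_assoc p.bclass q.bclass r.bclass
  | parNil p => exact mul_one p.bclass
  | distr a F n _ =>
    refine ext_step fun b z => ?_
    rw [step_bclass_pre, bclass_reps, step_pow_succ, bclass_par, bclass_reps]
    simp only [step_bclass_pre, and_assoc, exists_and_left, exists_eq_left]
  | congPre a _ ih => exact bclass_pre_congr a ih
  | congPar _ _ ih ih' => rw [bclass_par, bclass_par, ih, ih']
  | congRepl a _ ih => exact bclass_repl_congr a ih

/-- Prefixing `α.·` on bisimilarity classes. -/
def pre (a : A) : BisimClass A → BisimClass A :=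
  Quotient.map (Proc.pre a) fun _ _ h =>
    Proc.bclass_eq_iff.1 (bclass_pre_congr a (Proc.bclass_eq_iff.2 h))

/-- Replicated prefixing `!α.·` on bisimilarity classes. -/
def repl (a : A) : BisimClass A → BisimClass A :=
  Quotient.map (Proc.repl a) fun _ _ h =>
    Proc.bclass_eq_iff.1 (bclass_repl_congr a (Proc.bclass_eq_iff.2 h))

theorem step_pre {a b : A} {x y : BisimClass A} : (pre a x).Step b y ↔ b = a ∧ y = x := by
  obtain ⟨p, rfl⟩ := exists_bclass_eq x
  exact step_bclass_pre

theorem step_repl {a b : A} {x y : BisimClass A} :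
    (repl a x).Step b y ↔ b = a ∧ y = repl a x * x := by
  obtain ⟨p, rfl⟩ := exists_bclass_eq x
  exact step_bclass_repl

end BisimClass

/-! ### The monoid of `≡D`-classes -/

theorem EqD.size_eq {p q : Proc A} (h : EqD p q) : p.size = q.size := by
  have size_reps (n : ℕ) (p : Proc A) : (Proc.reps n p).size = n * p.size := by
    induction n with
    | zero => simp [Proc.reps, Proc.size]
    | succ n ih => simp only [Proc.reps, Proc.size, ih]; ring
  induction h with
  | refl p => rfl
  | symm _ ih => exact ih.symm
  | trans _ _ ih ih' => exact ih.trans ih'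
  | distr a F n _ => simp only [Proc.size, size_reps]; ring
  | _ => simp only [Proc.size]; omega

/-- The congruence `≡D` as an equivalence relation on processes. -/
def eqDSetoid (A : Type) : Setoid (Proc A) :=
  ⟨EqD, EqD.refl, EqD.symm, EqD.trans⟩

/-- Processes up to `≡D`: a commutative monoid under parallel composition. -/
def EqDClass (A : Type) : Type := Quotient (eqDSetoid A)

/-- The `≡D`-class of a process. -/
def Proc.dclass (p : Proc A) : EqDClass A := Quotient.mk (eqDSetoid A) p

theorem Proc.dclass_eq_iff {p q : Proc A} : p.dclass = q.dclass ↔ EqD p q := Quotient.eq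

namespace EqDClass

theorem exists_dclass_eq (x : EqDClass A) : ∃ p : Proc A, p.dclass = x := Quotient.exists_rep x

instance : CommMonoid (EqDClass A) where
  mul := Quotient.map₂ Proc.par fun _ _ hp _ _ hq => EqD.congPar hp hq
  one := Proc.nil.dclass
  mul_assoc := by rintro ⟨p⟩ ⟨q⟩ ⟨r⟩; exact Quotient.sound (EqD.parAssoc p q r)
  mul_comm := by rintro ⟨p⟩ ⟨q⟩; exact Quotient.sound (EqD.parComm p q)
  mul_one := by rintro ⟨p⟩; exact Quotient.sound (EqD.parNil p)
  one_mul := by rintro ⟨p⟩; exact Quotient.sound ((EqD.parComm _ _).trans (EqD.parNil p))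

/-- Prefixing `α.·` on `≡D`-classes. -/
def pre (a : A) : EqDClass A → EqDClass A :=
  Quotient.map (Proc.pre a) fun _ _ h => EqD.congPre a h

/-- Replicated prefixing `!α.·` on `≡D`-classes. -/
def repl (a : A) : EqDClass A → EqDClass A :=
  Quotient.map (Proc.repl a) fun _ _ h => EqD.congRepl a h

theorem dclass_par (p q : Proc A) : (p.par q).dclass = p.dclass * q.dclass := rfl

theorem dclass_pre (a : A) (p : Proc A) : (Proc.pre a p).dclass = pre a p.dclass := rfl

theorem dclass_repl (a : A) (p : Proc A) : (Proc.repl a p).dclass = repl a p.dclass := rfl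

theorem dclass_reps (n : ℕ) (p : Proc A) : (Proc.reps n p).dclass = p.dclass ^ n := by
  induction n with
  | zero => rfl
  | succ n ih => rw [Proc.reps, dclass_par, ih, pow_succ']

/-- The quotient homomorphism induced by the inclusion of `≡D` in bisimilarity. -/
def toBisim : EqDClass A →* BisimClass A where
  toFun := Quotient.lift Proc.bclass fun _ _ h => EqD.bclass_eq h
  map_one' := rfl
  map_mul' := by rintro ⟨p⟩ ⟨q⟩; rfl

theorem toBisim_dclass (p : Proc A) : toBisim p.dclass = p.bclass := rfl

theorem toBisim_pre (a : A) (x : EqDClass A) : toBisim (pre a x) = .pre a (toBisim x) := by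
  obtain ⟨p, rfl⟩ := exists_dclass_eq x
  rfl

theorem toBisim_repl (a : A) (x : EqDClass A) : toBisim (repl a x) = .repl a (toBisim x) := by
  obtain ⟨p, rfl⟩ := exists_dclass_eq x
  rfl

/-- The submonoid of `≡D`-classes of finite processes. -/
def finite (A : Type) : Submonoid (EqDClass A) where
  carrier := {x | ∃ p : Proc A, p.IsFin ∧ p.dclass = x}
  one_mem' := ⟨.nil, trivial, rfl⟩
  mul_mem' := by
    rintro _ _ ⟨p, hp, rfl⟩ ⟨q, hq, rfl⟩
    exact ⟨p.par q, ⟨hp, hq⟩, rfl⟩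

theorem _root_.CCS.Proc.IsFin.dclass_mem {p : Proc A} (hp : p.IsFin) : p.dclass ∈ finite A :=
  ⟨p, hp, rfl⟩

theorem pre_mem_finite {a : A} {x : EqDClass A} : x ∈ finite A → pre a x ∈ finite A := by
  rintro ⟨p, hp, rfl⟩
  exact ⟨.pre a p, hp, rfl⟩

theorem pre_mul_pre_pow {a : A} {x : EqDClass A} (hx : x ∈ finite A) (n : ℕ) :
    pre a (x * pre a x ^ n) = pre a x ^ (n + 1) := by
  obtain ⟨p, hp, rfl⟩ := hx
  rw [← dclass_pre, ← dclass_reps, ← dclass_par, ← dclass_pre, ← dclass_reps]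
  exact Proc.dclass_eq_iff.2 (.distr a p n hp)

end EqDClass

/-! ### Bisimilarity classes of finite processes -/

theorem Step.isFin {p q : Proc A} {a : A} (h : Step p a q) : p.IsFin → q.IsFin := by
  induction h with
  | pre => exact id
  | repl => exact False.elim
  | parL _ _ ih => exact fun hp => ⟨ih hp.1, hp.2⟩
  | parR _ _ ih => exact fun hp => ⟨hp.1, ih hp.2⟩

theorem Step.size_eq {p q : Proc A} {a : A} (h : Step p a q) :
    p.IsFin → p.size = q.size + 1 := by
  induction h with
  | pre => exact fun _ => rfl
  | repl => exact False.elim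
  | parL _ _ ih => intro hp; simp only [Proc.size, ih hp.1]; omega
  | parR _ _ ih => intro hp; simp only [Proc.size, ih hp.2]; omega

theorem Proc.exists_step_of_size_ne_zero {p : Proc A} (hp : p.size ≠ 0) :
    ∃ a q, Step p a q := by
  induction p with
  | nil => exact absurd rfl hp
  | pre a p _ => exact ⟨a, p, .pre⟩
  | repl a p _ => exact ⟨a, _, .repl⟩
  | par p q ihp ihq =>
    by_cases h : p.size = 0
    · obtain ⟨a, q', hs⟩ := ihq (by rwa [Proc.size, h, zero_add] at hp)
      exact ⟨a, _, hs.parR p⟩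
    · obtain ⟨a, p', hs⟩ := ihp h
      exact ⟨a, _, hs.parL q⟩

theorem Proc.bclass_eq_one_of_size_eq_zero {p : Proc A} (hp : p.size = 0) : p.bclass = 1 := by
  induction p with
  | nil => rfl
  | pre a p _ => exact absurd hp (Nat.succ_ne_zero _)
  | repl a p _ => exact absurd hp (Nat.succ_ne_zero _)
  | par p q ihp ihq =>
    obtain ⟨hp, hq⟩ := Nat.add_eq_zero_iff.1 hp
    rw [BisimClass.bclass_par, ihp hp, ihq hq, one_mul]

theorem Proc.size_eq_zero_of_bclass_eq_one {p : Proc A} (hp : p.bclass = 1) : p.size = 0 := by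
  by_contra h
  obtain ⟨a, q, hs⟩ := exists_step_of_size_ne_zero h
  exact BisimClass.not_step_one (hp ▸ hs.bclass)

theorem Proc.IsFin.size_congr {p q : Proc A} (hp : p.IsFin) (hq : q.IsFin)
    (h : p.bclass = q.bclass) : p.size = q.size := by
  induction hn : p.size generalizing p q with
  | zero => rw [size_eq_zero_of_bclass_eq_one (h ▸ bclass_eq_one_of_size_eq_zero hn)]
  | succ n ih =>
    obtain ⟨a, p', hs⟩ := exists_step_of_size_ne_zero (p := p) (by omega)
    obtain ⟨q', hs', h'⟩ := BisimClass.step_bclass.1 (h ▸ hs.bclass)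
    have hsize := hs.size_eq hp
    rw [hs'.size_eq hq, ← ih (hs.isFin hp) (hs'.isFin hq) h'.symm (by omega)]

namespace BisimClass

/-- The submonoid of bisimilarity classes of finite processes. -/
def finite (A : Type) : Submonoid (BisimClass A) := (EqDClass.finite A).map EqDClass.toBisim

theorem mem_finite {x : BisimClass A} : x ∈ finite A ↔ ∃ p : Proc A, p.IsFin ∧ p.bclass = x := by
  constructor
  · rintro ⟨_, ⟨p, hp, rfl⟩, rfl⟩
    exact ⟨p, hp, rfl⟩
  · rintro ⟨p, hp, rfl⟩
    exact ⟨p.dclass, hp.dclass_mem, rfl⟩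

theorem _root_.CCS.Proc.IsFin.bclass_mem {p : Proc A} (hp : p.IsFin) : p.bclass ∈ finite A :=
  mem_finite.2 ⟨p, hp, rfl⟩

theorem Step.mem_finite {x y : BisimClass A} {a : A} (h : x.Step a y) (hx : x ∈ finite A) :
    y ∈ finite A := by
  obtain ⟨p, hp, rfl⟩ := BisimClass.mem_finite.1 hx
  obtain ⟨q, hs, rfl⟩ := step_bclass.1 h
  exact (hs.isFin hp).bclass_mem

end BisimClass

/-! ### Unique factorization in graded transition monoids -/

/-- A transition system on a commutative monoid `M` in which a product moves by moving exactly one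
factor, every element other than `1` can move, and each move lowers an additive size by one. -/
structure GradedLTS (M A : Type*) [CommMonoid M] where
  Step : M → A → M → Prop
  size : M → ℕ
  size_mul (x y : M) : size (x * y) = size x + size y
  size_step {x y : M} {a : A} : Step x a y → size x = size y + 1
  step_mul {x y z : M} {a : A} :
    Step (x * y) a z ↔ (∃ x', Step x a x' ∧ z = x' * y) ∨ ∃ y', Step y a y' ∧ z = x * y'
  exists_step {x : M} : x ≠ 1 → ∃ a y, Step x a y

namespace GradedLTS

variable {M A : Type*} [CommMonoid M] (L : GradedLTS M A)

theorem size_one : L.size 1 = 0 := by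
  have h := L.size_mul 1 1
  rw [mul_one] at h
  omega

theorem not_step_one {a : A} {y : M} : ¬ L.Step 1 a y := fun h => by
  have := L.size_step h
  rw [L.size_one] at this
  omega

theorem size_pos {x : M} (hx : x ≠ 1) : 0 < L.size x := by
  obtain ⟨a, y, h⟩ := L.exists_step hx
  have := L.size_step h
  omega

theorem isUnit_iff (L : GradedLTS M A) {x : M} : IsUnit x ↔ x = 1 := by
  refine ⟨fun hx => ?_, fun hx => hx ▸ isUnit_one⟩
  obtain ⟨y, hy⟩ := hx.exists_right_inv
  by_contra hne
  have := L.size_mul x y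
  rw [hy, L.size_one] at this
  exact (L.size_pos hne).ne' (by omega)

theorem size_irreducible_pos {p : M} (hp : Irreducible p) : 0 < L.size p :=
  L.size_pos fun h => hp.not_isUnit (L.isUnit_iff.2 h)

theorem step_prod {s : Multiset M} {a : A} {z : M} :
    L.Step s.prod a z ↔ ∃ q u q', s = q ::ₘ u ∧ L.Step q a q' ∧ z = q' * u.prod := by
  induction s using Multiset.induction_on generalizing z with
  | empty =>
    simp only [Multiset.prod_zero, L.not_step_one, Multiset.zero_ne_cons, false_and, exists_false]
  | cons p s ih =>
    rw [Multiset.prod_cons, L.step_mul]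
    constructor
    · rintro (⟨p', hp, rfl⟩ | ⟨y, hy, rfl⟩)
      · exact ⟨p, s, p', rfl, hp, rfl⟩
      · obtain ⟨q, u, q', rfl, hq, rfl⟩ := ih.1 hy
        exact ⟨q, p ::ₘ u, q', Multiset.cons_swap _ _ _, hq,
          by rw [Multiset.prod_cons, mul_left_comm]⟩
    · rintro ⟨q, u, q', h, hq, rfl⟩
      rcases Multiset.cons_eq_cons.1 h with ⟨rfl, rfl⟩ | ⟨-, w, rfl, rfl⟩
      · exact Or.inl ⟨q', hq, rfl⟩
      · exact Or.inr ⟨q' * w.prod, ih.2 ⟨q, w, q', rfl, hq, rfl⟩,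
          by rw [Multiset.prod_cons, mul_left_comm]⟩

theorem size_le_size_prod {s : Multiset M} {p : M} (hp : p ∈ s) : L.size p ≤ L.size s.prod := by
  obtain ⟨u, rfl⟩ := Multiset.exists_cons_of_mem hp
  rw [Multiset.prod_cons, L.size_mul]
  exact Nat.le_add_right _ _

/-- A multiset of irreducible elements with product `x`. -/
def IsFactorization (s : Multiset M) (x : M) : Prop :=
  (∀ p ∈ s, Irreducible p) ∧ s.prod = x

theorem exists_isFactorization (L : GradedLTS M A) (x : M) : ∃ s, IsFactorization s x := by
  induction hn : L.size x using Nat.strong_induction_on generalizing x with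
  | _ n ih =>
    subst hn
    by_cases hone : x = 1
    · exact ⟨0, by simp, hone.symm⟩
    by_cases hirr : Irreducible x
    · exact ⟨{x}, by simpa using hirr, by simp⟩
    obtain ⟨y, z, rfl, hy, hz⟩ : ∃ y z, x = y * z ∧ y ≠ 1 ∧ z ≠ 1 := by
      simpa only [irreducible_iff, L.isUnit_iff, hone, not_false_eq_true, true_and, not_forall,
        not_or, exists_prop] using hirr
    have hsize := L.size_mul y z
    obtain ⟨s, hs, hsy⟩ := ih _ (by have := L.size_pos hz; omega) y rfl
    obtain ⟨t, ht, htz⟩ := ih _ (by have := L.size_pos hy; omega) z rfl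
    exact ⟨s + t, fun p hp => (Multiset.mem_add.1 hp).elim (hs p) (ht p),
      by rw [Multiset.prod_add, hsy, htz]⟩

/-- Some factorization of `x` into irreducible elements. -/
noncomputable def factors (x : M) : Multiset M := (L.exists_isFactorization x).choose

theorem isFactorization_factors (x : M) : IsFactorization (L.factors x) x :=
  (L.exists_isFactorization x).choose_spec

theorem card_le_size_prod {s : Multiset M} (hs : ∀ p ∈ s, Irreducible p) :
    s.card ≤ L.size s.prod := by
  induction s using Multiset.induction_on with
  | empty => simp
  | cons p s ih =>
    have hp := L.size_irreducible_pos (hs p (Multiset.mem_cons_self p s))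
    have hsize := ih fun q hq => hs q (Multiset.mem_cons_of_mem hq)
    rw [Multiset.prod_cons, L.size_mul, Multiset.card_cons]
    omega

theorem exists_step_forall_le {f : M → ℕ} (hf : ∀ y, f y ≤ L.size y) {x : M} (hx : x ≠ 1) :
    ∃ a y, L.Step x a y ∧ ∀ b z, L.Step x b z → f z ≤ f y := by
  let values : Set ℕ := {k | ∃ a y, L.Step x a y ∧ f y = k}
  have hbdd : BddAbove values := by
    refine ⟨L.size x, ?_⟩
    rintro _ ⟨a, y, h, rfl⟩
    have := L.size_step h
    have := hf y
    omega
  obtain ⟨a, y, h⟩ := L.exists_step hx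
  obtain ⟨b, z, hz, hmax⟩ := Nat.sSup_mem (s := values) ⟨f y, a, y, h, rfl⟩ hbdd
  exact ⟨b, z, hz, fun c w hw => hmax ▸ le_csSup hbdd ⟨c, w, hw, rfl⟩⟩

/-- Factorizations of the elements of size less than `n` are unique. -/
def UniqueFactorizationBelow (n : ℕ) : Prop :=
  ∀ x, L.size x < n → ∀ s t, IsFactorization s x → IsFactorization t x → s = t

section Multiplicity

variable [DecidableEq M]

/-- The multiplicity of `p` in the chosen factorization of `x`. -/
noncomputable def mult (p x : M) : ℕ := (L.factors x).count p

theorem mult_le_size (p x : M) : L.mult p x ≤ L.size x := by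
  obtain ⟨hirr, hprod⟩ := L.isFactorization_factors x
  calc L.mult p x ≤ (L.factors x).card := Multiset.count_le_card _ _
    _ ≤ L.size (L.factors x).prod := L.card_le_size_prod hirr
    _ = L.size x := by rw [hprod]

theorem mult_eq_zero_of_size_lt {p x : M} (h : L.size x < L.size p) : L.mult p x = 0 := by
  rw [mult, Multiset.count_eq_zero]
  intro hp
  have := L.size_le_size_prod hp
  rw [(L.isFactorization_factors x).2] at this
  omega

variable {L}

theorem UniqueFactorizationBelow.mult_mul_prod {x q q' : M} {u : Multiset M} {a : A}
    (hL : L.UniqueFactorizationBelow (L.size x)) (hx : IsFactorization (q ::ₘ u) x)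
    (h : L.Step q a q') (p : M) : L.mult p (q' * u.prod) = L.mult p q' + u.count p := by
  obtain ⟨hirr', hprod'⟩ := L.isFactorization_factors q'
  have hfac : IsFactorization (L.factors q' + u) (q' * u.prod) :=
    ⟨fun p hp => (Multiset.mem_add.1 hp).elim (hirr' p)
      fun hpu => hx.1 p (Multiset.mem_cons_of_mem hpu), by rw [Multiset.prod_add, hprod']⟩
  have hsize : L.size (q' * u.prod) < L.size x := by
    rw [← hx.2, Multiset.prod_cons, L.size_mul, L.size_mul, L.size_step h]
    omega
  rw [mult, hL _ hsize _ _ (L.isFactorization_factors _) hfac, Multiset.count_add, mult]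

variable {x p : M} {s t : Multiset M}

/- Among all transitions of `x`, one maximizing the multiplicity of `p` moves a factor `r` of `t`
that is larger than `p`; moving the same factor in `s` would yield a larger multiplicity. -/
theorem UniqueFactorizationBelow.count_le_of_exists_ne
    (hL : L.UniqueFactorizationBelow (L.size x)) (hs : IsFactorization s x)
    (ht : IsFactorization t x) (hlarger : ∀ q, L.size p < L.size q → s.count q = t.count q)
    (hne : ∃ q ∈ s, q ≠ p) : s.count p ≤ t.count p := by
  by_contra! hlt
  obtain ⟨q, hq, hqp⟩ := hne
  obtain ⟨u, rfl⟩ := Multiset.exists_cons_of_mem hq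
  have hirr : Irreducible q := hs.1 q hq
  obtain ⟨a, q', hstep⟩ := L.exists_step hirr.ne_one
  have hx : x ≠ 1 := by
    rintro rfl
    exact hirr.not_isUnit (.of_mul_eq_one _ (by rw [← Multiset.prod_cons, hs.2]))
  obtain ⟨b, y, hy, hmax⟩ := L.exists_step_forall_le (L.mult_le_size p) hx
  have hcount_le : (q ::ₘ u).count p ≤ L.mult p y := by
    have := hmax a _ (hs.2 ▸ L.step_prod.2 ⟨q, u, q', rfl, hstep, rfl⟩)
    rw [hL.mult_mul_prod hs hstep] at this
    rw [Multiset.count_cons_of_ne hqp.symm]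
    omega
  obtain ⟨r, w, r', rfl, hr, rfl⟩ := L.step_prod.1 (ht.2 ▸ hy)
  rw [hL.mult_mul_prod ht hr] at hcount_le hmax
  have hw := Multiset.count_le_of_le p (Multiset.le_cons_self w r)
  have hsize : L.size p < L.size r := by
    by_contra! hle
    have := L.mult_eq_zero_of_size_lt (p := p) (x := r') (by have := L.size_step hr; omega)
    omega
  have hrp : r ≠ p := by rintro rfl; exact hsize.ne rfl
  have hrs : r ∈ q ::ₘ u := by
    rw [← Multiset.count_pos, hlarger r hsize, Multiset.count_cons_self]
    omega
  obtain ⟨v, hv⟩ := Multiset.exists_cons_of_mem hrs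
  rw [hv] at hs hlt
  have := hmax b _ (hs.2 ▸ L.step_prod.2 ⟨r, v, r', rfl, hr, rfl⟩)
  rw [hL.mult_mul_prod hs hr] at this
  rw [Multiset.count_cons_of_ne hrp.symm, Multiset.count_cons_of_ne hrp.symm] at hlt
  omega

theorem UniqueFactorizationBelow.count_eq_of_replicate {k : ℕ} {r : M}
    (hL : L.UniqueFactorizationBelow (L.size x)) (hs : IsFactorization (.replicate (k + 1) p) x)
    (ht : IsFactorization (r ::ₘ t) x) (hle : L.size r ≤ L.size p) : t.count p = k := by
  obtain ⟨a, r', hr⟩ := L.exists_step (ht.1 r (Multiset.mem_cons_self _ _)).ne_one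
  have hstep : L.Step x a (r' * t.prod) := ht.2 ▸ L.step_prod.2 ⟨r, t, r', rfl, hr, rfl⟩
  obtain ⟨q, u, p', hqu, hp', heq⟩ := L.step_prod.1 (hs.2 ▸ hstep)
  obtain rfl : q = p := Multiset.eq_of_mem_replicate (hqu ▸ Multiset.mem_cons_self q u)
  rw [hqu] at hs
  rw [Multiset.replicate_succ, Multiset.cons_inj_right] at hqu
  have hmult := congrArg (L.mult q) heq
  rw [hL.mult_mul_prod ht hr, hL.mult_mul_prod hs hp', ← hqu, Multiset.count_replicate_self,
    L.mult_eq_zero_of_size_lt (by have := L.size_step hr; omega),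
    L.mult_eq_zero_of_size_lt (by have := L.size_step hp'; omega)] at hmult
  omega

theorem UniqueFactorizationBelow.count_le_of_forall_eq
    (hL : L.UniqueFactorizationBelow (L.size x)) (hs : IsFactorization s x)
    (ht : IsFactorization t x) (hlarger : ∀ q, L.size p < L.size q → s.count q = t.count q)
    (heq : ∀ q ∈ s, q = p) : s.count p ≤ t.count p := by
  by_contra! hlt
  obtain ⟨k, hk⟩ := Nat.exists_eq_add_one_of_ne_zero (Nat.ne_zero_of_lt hlt)
  have hp : Irreducible p := hs.1 p (Multiset.count_pos.1 (by omega))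
  obtain rfl : s = .replicate (k + 1) p := by
    rw [Multiset.eq_replicate_of_mem heq, Multiset.count_replicate_self] at hk
    rw [Multiset.eq_replicate_of_mem heq, hk]
  have hcount {r w} (hrw : t = r ::ₘ w) : w.count p = k := by
    refine hL.count_eq_of_replicate hs (hrw ▸ ht) (le_of_not_gt fun hlt => hlt.ne' ?_)
    have hr : r ∈ Multiset.replicate (k + 1) p := by
      rw [← Multiset.count_pos, hlarger r hlt, hrw, Multiset.count_cons_self]
      omega
    rw [heq r hr]
  have hpt : p ∉ t := by
    intro hpt
    obtain ⟨w, rfl⟩ := Multiset.exists_cons_of_mem hpt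
    rw [Multiset.count_cons_self, hcount rfl] at hlt
    omega
  induction t using Multiset.induction_on with
  | empty =>
    rw [IsFactorization, Multiset.prod_zero] at ht
    exact hp.not_isUnit (.of_mul_eq_one (p ^ k) (by
      rw [← pow_succ', ← Multiset.prod_replicate, hs.2, ht.2]))
  | cons r w =>
    obtain rfl : k = 0 := by
      rw [← hcount rfl, Multiset.count_eq_zero]
      exact fun h => hpt (Multiset.mem_cons_of_mem h)
    have hprw : p = r * w.prod := by
      rw [← Multiset.prod_cons, ht.2, ← hs.2, zero_add, Multiset.replicate_one,
        Multiset.prod_singleton]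
    rcases hp.isUnit_or_isUnit hprw with hr | hw
    · exact (ht.1 r (Multiset.mem_cons_self r w)).not_isUnit hr
    · rw [L.isUnit_iff.1 hw, mul_one] at hprw
      exact hpt (hprw ▸ Multiset.mem_cons_self r w)

theorem UniqueFactorizationBelow.count_le
    (hL : L.UniqueFactorizationBelow (L.size x)) (hs : IsFactorization s x)
    (ht : IsFactorization t x) (hlarger : ∀ q, L.size p < L.size q → s.count q = t.count q) :
    s.count p ≤ t.count p := by
  by_cases hne : ∃ q ∈ s, q ≠ p
  · exact hL.count_le_of_exists_ne hs ht hlarger hne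
  · exact hL.count_le_of_forall_eq hs ht hlarger (by push Not at hne; exact hne)

end Multiplicity

theorem IsFactorization.unique (L : GradedLTS M A) {x : M} {s t : Multiset M}
    (hs : IsFactorization s x) (ht : IsFactorization t x) : s = t := by
  classical
  induction hn : L.size x using Nat.strong_induction_on generalizing x s t with
  | _ n ih =>
    have hL : L.UniqueFactorizationBelow (L.size x) :=
      fun y hy _ _ hs ht => ih _ (hn ▸ hy) hs ht rfl
    let differing := (s.toFinset ∪ t.toFinset).filter fun p => s.count p ≠ t.count p
    have mem_differing {p : M} (h : s.count p ≠ t.count p) : p ∈ differing := by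
      simp only [differing, Finset.mem_filter, Finset.mem_union, Multiset.mem_toFinset,
        ← Multiset.count_pos]
      omega
    by_contra hst
    obtain ⟨p, hp⟩ := not_forall.1 (mt Multiset.ext.2 hst)
    obtain ⟨q, hq, hmax⟩ := differing.exists_max_image L.size ⟨p, mem_differing hp⟩
    have hlarger (r : M) (hr : L.size q < L.size r) : s.count r = t.count r := by
      by_contra h
      exact hr.not_ge (hmax r (mem_differing h))
    exact (Finset.mem_filter.1 hq).2 <|
      (hL.count_le hs ht hlarger).antisymm (hL.count_le ht hs fun r hr => (hlarger r hr).symm)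

theorem mul_left_cancel (L : GradedLTS M A) {x y z : M} (h : x * y = x * z) : y = z := by
  obtain ⟨hx, hx'⟩ := L.isFactorization_factors x
  have mul_factors (y : M) : IsFactorization (L.factors x + L.factors y) (x * y) := by
    obtain ⟨hy, hy'⟩ := L.isFactorization_factors y
    exact ⟨fun p hp => (Multiset.mem_add.1 hp).elim (hx p) (hy p),
      by rw [Multiset.prod_add, hx', hy']⟩
  have := IsFactorization.unique L (mul_factors y) (h ▸ mul_factors z)
  rw [← (L.isFactorization_factors y).2, add_left_cancel this, (L.isFactorization_factors z).2]

/- If distinct factors `p → p'` and `q → q'` both occurred, the two residuals would agree, so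
`p' * q = q' * p` by cancellation, and `p` would have to divide `p'` by uniqueness. -/
theorem eq_of_mem_of_subsingleton_step {s : Multiset M} {p q : M} (hs : ∀ p ∈ s, Irreducible p)
    (hstep : ∀ a y b z, L.Step s.prod a y → L.Step s.prod b z → y = z)
    (hp : p ∈ s) (hq : q ∈ s) : p = q := by
  classical
  by_contra hpq
  obtain ⟨u, rfl⟩ := Multiset.exists_cons_of_mem hp
  obtain ⟨w, rfl⟩ := Multiset.exists_cons_of_mem
    ((Multiset.mem_cons.1 hq).resolve_left (Ne.symm hpq))
  obtain ⟨a, p', hp'⟩ := L.exists_step (hs p hp).ne_one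
  obtain ⟨b, q', hq'⟩ := L.exists_step (hs q hq).ne_one
  have hres : w.prod * (p' * q) = w.prod * (q' * p) := by
    have := hstep _ _ _ _ (L.step_prod.2 ⟨p, q ::ₘ w, p', rfl, hp', rfl⟩)
      (L.step_prod.2 ⟨q, p ::ₘ w, q', Multiset.cons_swap _ _ _, hq', rfl⟩)
    simpa only [Multiset.prod_cons, mul_comm, mul_left_comm, mul_assoc] using this
  have cons_factors {r r' : M} (hr : r ∈ p ::ₘ q ::ₘ w) :
      IsFactorization (r ::ₘ L.factors r') (r' * r) := by
    obtain ⟨hirr, hprod⟩ := L.isFactorization_factors r'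
    exact ⟨fun t ht => (Multiset.mem_cons.1 ht).elim (· ▸ hs r hr) (hirr t),
      by rw [Multiset.prod_cons, hprod, mul_comm]⟩
  have hfac := IsFactorization.unique L (cons_factors (r' := p') hq)
    (L.mul_left_cancel hres ▸ cons_factors (r' := q') hp)
  have hmult := congrArg (Multiset.count p) hfac
  have hzero := L.mult_eq_zero_of_size_lt (p := p) (x := p') (by have := L.size_step hp'; omega)
  rw [mult] at hzero
  rw [Multiset.count_cons_of_ne hpq, hzero, Multiset.count_cons_self] at hmult
  omega

theorem exists_eq_pow_of_step_iff {x y : M} {a : A} (h : ∀ b z, L.Step x b z ↔ b = a ∧ z = y) :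
    ∃ p p' n, Irreducible p ∧ (∀ b z, L.Step p b z ↔ b = a ∧ z = p') ∧
      x = p ^ (n + 1) ∧ y = p' * p ^ n := by
  obtain ⟨s, hs, rfl⟩ := L.exists_isFactorization x
  obtain ⟨p, u, p', rfl, hp', rfl⟩ := L.step_prod.1 ((h a y).2 ⟨rfl, rfl⟩)
  have hu : u = .replicate u.card p := Multiset.eq_replicate_of_mem fun q hq =>
    L.eq_of_mem_of_subsingleton_step hs
      (fun _ _ _ _ hb hc => ((h _ _).1 hb).2.trans ((h _ _).1 hc).2.symm)
      (Multiset.mem_cons_of_mem hq) (Multiset.mem_cons_self p u)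
  have hprod : u.prod = p ^ u.card := by rw [hu, Multiset.prod_replicate, Multiset.card_replicate]
  refine ⟨p, p', u.card, hs p (Multiset.mem_cons_self p u), fun b z => ⟨fun hz => ?_, ?_⟩,
    by rw [Multiset.prod_cons, hprod, pow_succ'], by rw [hprod]⟩
  · obtain ⟨rfl, heq⟩ := (h _ _).1 (L.step_prod.2 ⟨p, u, z, rfl, hz, rfl⟩)
    rw [mul_comm, mul_comm p'] at heq
    exact ⟨rfl, L.mul_left_cancel heq⟩
  · rintro ⟨rfl, rfl⟩
    exact hp'

end GradedLTS

/-! ### Completeness of `≡D` for finite processes -/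

namespace BisimClass

/-- The transition system of finite processes up to bisimilarity. The size of a class is read off
an arbitrary finite representative. -/
noncomputable def finiteLTS (A : Type) : GradedLTS (finite A) A where
  Step x a y := x.1.Step a y.1
  size x := (mem_finite.1 x.2).choose.size
  size_mul x y := by
    obtain ⟨hx, hx'⟩ := (mem_finite.1 x.2).choose_spec
    obtain ⟨hy, hy'⟩ := (mem_finite.1 y.2).choose_spec
    obtain ⟨hxy, hxy'⟩ := (mem_finite.1 (x * y).2).choose_spec
    refine hxy.size_congr (q := .par _ _) ⟨hx, hy⟩ ?_
    rw [hxy', bclass_par, hx', hy', Submonoid.coe_mul]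
  size_step {x y a} h := by
    obtain ⟨hx, hx'⟩ := (mem_finite.1 x.2).choose_spec
    obtain ⟨hy, hy'⟩ := (mem_finite.1 y.2).choose_spec
    obtain ⟨q, hs, hq⟩ := step_bclass.1 (hx'.symm ▸ h)
    rw [hs.size_eq hx, (hs.isFin hx).size_congr hy (hq.trans hy'.symm)]
  step_mul {x y z a} := by
    rw [Submonoid.coe_mul, BisimClass.step_mul]
    constructor
    · rintro (⟨x', h, hz⟩ | ⟨y', h, hz⟩)
      · exact Or.inl ⟨⟨x', h.mem_finite x.2⟩, h, Subtype.ext hz⟩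
      · exact Or.inr ⟨⟨y', h.mem_finite y.2⟩, h, Subtype.ext hz⟩
    · rintro (⟨x', h, rfl⟩ | ⟨y', h, rfl⟩)
      · exact Or.inl ⟨x', h, rfl⟩
      · exact Or.inr ⟨y', h, rfl⟩
  exists_step {x} hx := by
    obtain ⟨p, hp, hpx⟩ := mem_finite.1 x.2
    have hsize : p.size ≠ 0 := fun h =>
      hx (Subtype.ext (hpx.symm.trans (Proc.bclass_eq_one_of_size_eq_zero h)))
    obtain ⟨a, q, hs⟩ := Proc.exists_step_of_size_ne_zero hsize
    exact ⟨a, ⟨q.bclass, (hs.isFin hp).bclass_mem⟩, hpx ▸ hs.bclass⟩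

theorem finite_ext_step {x y : finite A}
    (h : ∀ a z, (finiteLTS A).Step x a z ↔ (finiteLTS A).Step y a z) : x = y :=
  Subtype.ext <| ext_step fun a z =>
    ⟨fun hz => (h a ⟨z, hz.mem_finite x.2⟩).1 hz, fun hz => (h a ⟨z, hz.mem_finite y.2⟩).2 hz⟩

end BisimClass

namespace EqDClass

open BisimClass (finiteLTS)

/-- Prefixing `α.·` on `≡D`-classes of finite processes. -/
def finitePre (a : A) (x : finite A) : finite A := ⟨pre a x, pre_mem_finite x.2⟩

/-- The restriction of `toBisim` to finite processes. -/
def finiteToBisim (A : Type) : finite A →* BisimClass.finite A :=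
  toBisim.submonoidMap (finite A)

theorem finiteToBisim_surjective : Function.Surjective (finiteToBisim A) :=
  toBisim.submonoidMap_surjective (finite A)

theorem step_finiteToBisim_finitePre {a b : A} {x : finite A} {y : BisimClass.finite A} :
    (finiteLTS A).Step (finiteToBisim A (finitePre a x)) b y ↔ b = a ∧ y = finiteToBisim A x := by
  have : (finiteToBisim A (finitePre a x) : BisimClass A) = .pre a (finiteToBisim A x) :=
    toBisim_pre a x
  change BisimClass.Step _ _ _ ↔ _
  rw [this, BisimClass.step_pre, Subtype.ext_iff]

theorem size_finiteToBisim_finitePre (a : A) (x : finite A) :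
    (finiteLTS A).size (finiteToBisim A (finitePre a x)) =
      (finiteLTS A).size (finiteToBisim A x) + 1 :=
  (finiteLTS A).size_step (step_finiteToBisim_finitePre.2 ⟨rfl, rfl⟩)

theorem finitePre_mul_finitePre_pow (a : A) (x : finite A) (n : ℕ) :
    finitePre a (x * finitePre a x ^ n) = finitePre a x ^ (n + 1) :=
  Subtype.ext (by simpa [finitePre] using pre_mul_pre_pow x.2 n)

theorem finite_induction {motive : finite A → Prop} (one : motive 1)
    (mul : ∀ x y, motive x → motive y → motive (x * y))
    (pre : ∀ a x, motive x → motive (finitePre a x)) (x : finite A) : motive x := by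
  obtain ⟨_, p, hp, rfl⟩ := x
  induction p with
  | nil => exact one
  | pre a p ih => exact pre a ⟨p.dclass, p, hp, rfl⟩ (ih hp)
  | par p q ihp ihq => exact mul ⟨_, hp.1.dclass_mem⟩ ⟨_, hp.2.dclass_mem⟩ (ihp hp.1) (ihq hp.2)
  | repl => exact hp.elim

/-- `finiteToBisim` is injective on the classes of size less than `n`. -/
def InjectiveBelow (A : Type) (n : ℕ) : Prop :=
  ∀ x y : finite A, (finiteLTS A).size (finiteToBisim A x) < n →
    finiteToBisim A x = finiteToBisim A y → x = y

theorem InjectiveBelow.exists_finitePre_eq_pow {n : ℕ} (hinj : InjectiveBelow A n) (a : A)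
    (x : finite A) (hx : (finiteLTS A).size (finiteToBisim A (finitePre a x)) ≤ n) :
    ∃ (y : finite A) (k : ℕ),
      Irreducible (finiteToBisim A (finitePre a y)) ∧ finitePre a x = finitePre a y ^ k := by
  obtain ⟨p, p', k, hp, hstep, -, hres⟩ :=
    (finiteLTS A).exists_eq_pow_of_step_iff (x := finiteToBisim A (finitePre a x))
      (y := finiteToBisim A x) fun _ _ => step_finiteToBisim_finitePre
  obtain ⟨y, rfl⟩ := finiteToBisim_surjective p'
  obtain rfl : finiteToBisim A (finitePre a y) = p :=
    BisimClass.finite_ext_step fun b z => by rw [step_finiteToBisim_finitePre, hstep]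
  refine ⟨y, k + 1, hp, ?_⟩
  rw [size_finiteToBisim_finitePre] at hx
  rw [hinj x (y * finitePre a y ^ k) hx (by rw [hres, map_mul, map_pow]),
    finitePre_mul_finitePre_pow]

theorem InjectiveBelow.exists_multiset_finitePre {n : ℕ} (hinj : InjectiveBelow A n) (x : finite A)
    (hx : (finiteLTS A).size (finiteToBisim A x) ≤ n) :
    ∃ s : Multiset (finite A), s.prod = x ∧
      ∀ g ∈ s, Irreducible (finiteToBisim A g) ∧ ∃ a y, g = finitePre a y := by
  induction x using finite_induction with
  | one => exact ⟨0, rfl, by simp⟩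
  | mul x y ihx ihy =>
    rw [map_mul, (finiteLTS A).size_mul] at hx
    obtain ⟨s, rfl, hs⟩ := ihx (by omega)
    obtain ⟨t, rfl, ht⟩ := ihy (by omega)
    exact ⟨s + t, Multiset.prod_add s t, fun g hg => (Multiset.mem_add.1 hg).elim (hs g) (ht g)⟩
  | pre a x _ =>
    obtain ⟨y, k, hirr, heq⟩ := hinj.exists_finitePre_eq_pow a x hx
    refine ⟨.replicate k (finitePre a y), by rw [Multiset.prod_replicate, heq], fun g hg => ?_⟩
    obtain rfl := Multiset.eq_of_mem_replicate hg
    exact ⟨hirr, a, y, rfl⟩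

theorem InjectiveBelow.finitePre_inj {n : ℕ} (hinj : InjectiveBelow A n) {a b : A} {x y : finite A}
    (hx : (finiteLTS A).size (finiteToBisim A (finitePre a x)) ≤ n)
    (h : finiteToBisim A (finitePre a x) = finiteToBisim A (finitePre b y)) :
    finitePre a x = finitePre b y := by
  obtain ⟨rfl, hxy⟩ := step_finiteToBisim_finitePre.1
    (h ▸ step_finiteToBisim_finitePre.2 ⟨rfl, rfl⟩)
  rw [size_finiteToBisim_finitePre] at hx
  rw [hinj x y hx hxy]

theorem injectiveBelow (n : ℕ) : InjectiveBelow A n := by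
  induction n with
  | zero => exact fun x y hx => absurd hx (Nat.not_lt_zero _)
  | succ n hinj =>
    intro x y hx hxy
    have hx := Nat.lt_succ_iff.1 hx
    obtain ⟨s, rfl, hs⟩ := hinj.exists_multiset_finitePre x hx
    obtain ⟨t, rfl, ht⟩ := hinj.exists_multiset_finitePre y (hxy ▸ hx)
    have isFactorization_map {s : Multiset (finite A)}
        (hs : ∀ g ∈ s, Irreducible (finiteToBisim A g) ∧ ∃ a y, g = finitePre a y) :
        GradedLTS.IsFactorization (s.map (finiteToBisim A)) (finiteToBisim A s.prod) :=
      ⟨Multiset.forall_mem_map_iff.2 fun g hg => (hs g hg).1, (map_multiset_prod _ s).symm⟩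
    have hmap : s.map (finiteToBisim A) = t.map (finiteToBisim A) :=
      GradedLTS.IsFactorization.unique (finiteLTS A) (isFactorization_map hs)
        (hxy ▸ isFactorization_map ht)
    have hrel : Multiset.Rel (fun g h => finiteToBisim A g = finiteToBisim A h) s t := by
      rwa [← Multiset.rel_map, Multiset.rel_eq]
    rw [Multiset.rel_eq.1 (hrel.mono fun g hg h hh heq => ?_)]
    have hsize : (finiteLTS A).size (finiteToBisim A g) ≤ n :=
      ((finiteLTS A).size_le_size_prod (Multiset.mem_map_of_mem _ hg)).trans
        (by rwa [← map_multiset_prod])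
    obtain ⟨-, a, x, rfl⟩ := hs g hg
    obtain ⟨-, b, y, rfl⟩ := ht h hh
    exact hinj.finitePre_inj hsize heq

theorem toBisim_injOn_finite : Set.InjOn toBisim (finite A : Set (EqDClass A)) :=
  fun x hx y hy h => congrArg Subtype.val <|
    injectiveBelow _ (⟨x, hx⟩ : finite A) ⟨y, hy⟩ (Nat.lt_succ_self _) (Subtype.ext h)

end EqDClass

/-! ### Replicative classes -/

namespace BisimClass

/-- A class whose transitions all spawn a finite process next to the class itself, such as
the bisimilarity class of a parallel composition of replicated prefixes of finite processes. -/
def IsReplicative (b : BisimClass A) : Prop :=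
  ∀ a z, b.Step a z → ∃ h ∈ finite A, z = b * h

variable {b c x y : BisimClass A}

/- Let `N` be the set of factors of `b` up to absorption into `b`. If `y ∈ N` with complement `c`
moves to `y'`, then so does `b = b * y * c` to `b * y' * c`: hence the pairs
`(b * y * z, b * w * z)` with `y, w ∈ N` form a bisimulation. -/
theorem IsReplicative.mul_eq_self_of_mul_mul_eq_self (hb : b.IsReplicative) (h : b * x * y = b) :
    b * x = b := by
  let N : Set (BisimClass A) := {y | ∃ c, b * y * c = b}
  have mul_mem {y w : BisimClass A} : y ∈ N → w ∈ N → y * w ∈ N := by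
    rintro ⟨c, hc⟩ ⟨d, hd⟩
    exact ⟨c * d, calc
      b * (y * w) * (c * d) = b * y * c * w * d := by ac_rfl
      _ = b := by rw [hc, hd]⟩
  let R (u v : BisimClass A) : Prop := ∃ y ∈ N, ∃ w ∈ N, ∃ z, u = b * y * z ∧ v = b * w * z
  have symm (u v : BisimClass A) : R u v → R v u := by
    rintro ⟨y, hy, w, hw, z, hu, hv⟩
    exact ⟨w, hw, y, hy, z, hv, hu⟩
  have forth (u v : BisimClass A) : R u v → ∀ a u', u.Step a u' → ∃ v', v.Step a v' ∧ R u' v' := by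
    rintro ⟨y, hy, w, hw, z, rfl, rfl⟩ a u' hs
    rcases step_mul.1 hs with ⟨v, hv, rfl⟩ | ⟨z', hz, rfl⟩
    · rcases step_mul.1 hv with ⟨b', hb', rfl⟩ | ⟨y', hy', rfl⟩
      · obtain ⟨h, -, rfl⟩ := hb _ _ hb'
        exact ⟨_, (hb'.mul_right w).mul_right z, y, hy, w, hw, h * z, by ac_rfl, by ac_rfl⟩
      · obtain ⟨c, hc⟩ := hy
        have hbc : b.Step a (b * y' * c) := by
          simpa only [hc] using (hy'.mul_left b).mul_right c
        exact ⟨_, (hbc.mul_right w).mul_right z, 1, ⟨1, by simp⟩, c * w,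
          mul_mem ⟨y, by rw [mul_right_comm, hc]⟩ hw, y' * z, by rw [mul_one, mul_assoc],
          by ac_rfl⟩
    · exact ⟨_, hz.mul_left _, y, hy, w, hw, z', rfl, rfl⟩
  refine eq_of_simulations R forth (fun u v huv a v' hs => ?_)
    ⟨x, ⟨y, h⟩, 1, ⟨1, by simp⟩, 1, by simp, by simp⟩
  obtain ⟨u', hu, h'⟩ := forth v u (symm u v huv) a v' hs
  exact ⟨u', hu, symm _ _ h'⟩

theorem IsReplicative.mul_eq_mul_of_steps (hb : b.IsReplicative)
    (hxy : ∀ a x', x.Step a x' → (b * y).Step a (b * x'))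
    (hyx : ∀ a y', y.Step a y' → (b * x).Step a (b * y')) : b * x = b * y := by
  have exists_step {x y : BisimClass A} (hxy : ∀ a x', x.Step a x' → (b * y).Step a (b * x'))
      {z u : BisimClass A} {a : A} (hs : (b * x * z).Step a u) :
      (b * y * z).Step a u ∨ ∃ w, u = b * x * w ∧ (b * y * z).Step a (b * y * w) := by
    rcases step_mul.1 hs with ⟨v, hv, rfl⟩ | ⟨z', hz, rfl⟩
    · rcases step_mul.1 hv with ⟨b', hb', rfl⟩ | ⟨x', hx, rfl⟩
      · obtain ⟨h, -, rfl⟩ := hb _ _ hb'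
        have hs' := (hb'.mul_right y).mul_right z
        rw [mul_right_comm b h y, mul_assoc (b * y)] at hs'
        exact Or.inr ⟨h * z, by ac_rfl, hs'⟩
      · exact Or.inl ((hxy _ _ hx).mul_right z)
    · exact Or.inr ⟨z', rfl, hz.mul_left _⟩
  refine eq_of_simulations (fun u v => u = v ∨ ∃ z, u = b * x * z ∧ v = b * y * z) ?_ ?_
    (Or.inr ⟨1, by simp, by simp⟩)
  · rintro u _ (rfl | ⟨z, rfl, rfl⟩) a u' hs
    · exact ⟨u', hs, Or.inl rfl⟩
    · rcases exists_step hxy hs with h | ⟨w, rfl, h⟩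
      · exact ⟨u', h, Or.inl rfl⟩
      · exact ⟨_, h, Or.inr ⟨w, rfl, rfl⟩⟩
  · rintro u _ (rfl | ⟨z, rfl, rfl⟩) a v' hs
    · exact ⟨v', hs, Or.inl rfl⟩
    · rcases exists_step hyx hs with h | ⟨w, rfl, h⟩
      · exact ⟨v', h, Or.inl rfl⟩
      · exact ⟨_, h, Or.inr ⟨w, rfl, rfl⟩⟩

theorem IsReplicative.mul_pre_congr (hb : b.IsReplicative) (a : A) (h : b * x = b * y) :
    b * pre a x = b * pre a y := by
  refine hb.mul_eq_mul_of_steps ?_ ?_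
  · rintro _ _ hs
    obtain ⟨rfl, rfl⟩ := step_pre.1 hs
    exact h ▸ (step_pre.2 ⟨rfl, rfl⟩).mul_left b
  · rintro _ _ hs
    obtain ⟨rfl, rfl⟩ := step_pre.1 hs
    exact h ▸ (step_pre.2 ⟨rfl, rfl⟩).mul_left b

theorem step_of_mul_pre_eq_self {a : A} (h : b * pre a x = b) : b.Step a (b * x) := by
  have hs : (b * pre a x).Step a (b * x) := (step_pre.2 ⟨rfl, rfl⟩).mul_left b
  rwa [h] at hs

theorem finite_step_induction {motive : BisimClass A → Prop} (one : motive 1)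
    (step : ∀ x a y, x.Step a y → motive y → motive x) (hx : x ∈ finite A) : motive x := by
  obtain ⟨p, hp, rfl⟩ := mem_finite.1 hx
  induction hn : p.size generalizing p with
  | zero => exact Proc.bclass_eq_one_of_size_eq_zero hn ▸ one
  | succ n ih =>
    obtain ⟨a, q, hs⟩ := Proc.exists_step_of_size_ne_zero (p := p) (by omega)
    have hsize := hs.size_eq hp
    exact step _ a _ hs.bclass (ih q (hs.isFin hp) (hs.isFin hp).bclass_mem (by omega))

theorem IsReplicative.exists_eq_mul_of_mul_eq_mul (hc : c.IsReplicative) (hx : x ∈ finite A)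
    (hy : y ∈ finite A) (h : b * x = c * y) : ∃ z ∈ finite A, b = c * z := by
  refine finite_step_induction
    (motive := fun x => ∀ y ∈ finite A, b * x = c * y → ∃ z ∈ finite A, b = c * z) ?_ ?_ hx y hy h
  · exact fun y hy h => ⟨y, hy, by rwa [mul_one] at h⟩
  · intro x a x' hs ih y hy h
    rcases step_mul.1 (h ▸ hs.mul_left b) with ⟨c', hc', heq⟩ | ⟨y', hy', heq⟩
    · obtain ⟨k, hk, rfl⟩ := hc _ _ hc'
      exact ih (k * y) (mul_mem hk hy) (by rw [heq, mul_assoc])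
    · exact ih y' (hy'.mem_finite hy) heq

theorem IsReplicative.eq_of_mul_eq_mul (hb : b.IsReplicative) (hc : c.IsReplicative)
    (hx : x ∈ finite A) (hy : y ∈ finite A) (h : b * x = c * y) : b = c := by
  obtain ⟨z, -, hz⟩ := hc.exists_eq_mul_of_mul_eq_mul hx hy h
  obtain ⟨w, -, hw⟩ := hb.exists_eq_mul_of_mul_eq_mul hy hx h.symm
  rw [hw, hb.mul_eq_self_of_mul_mul_eq_self (by rw [← hw, ← hz])]

end BisimClass

/-! ### Reduced finite processes and contexts -/

/-- `b.Reduced p`: the process `p` is finite and `b` absorbs none of its prefixed subterms. -/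
def BisimClass.Reduced (b : BisimClass A) : Proc A → Prop
  | .nil => True
  | .pre a p => b.Reduced p ∧ b * (Proc.pre a p).bclass ≠ b
  | .par p q => b.Reduced p ∧ b.Reduced q
  | .repl _ _ => False

namespace BisimClass.Reduced

variable {b w : BisimClass A} {p q : Proc A}

theorem isFin (hp : b.Reduced p) : p.IsFin := by
  induction p with
  | nil => trivial
  | pre a p ih => exact ih hp.1
  | par p q ihp ihq => exact ⟨ihp hp.1, ihq hp.2⟩
  | repl => exact hp.elim

theorem of_step {a : A} (hs : CCS.Step p a q) (hp : b.Reduced p) : b.Reduced q := by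
  induction hs with
  | pre => exact hp.1
  | repl => exact hp.elim
  | parL _ _ ih => exact ⟨ih hp.1, hp.2⟩
  | parR _ _ ih => exact ⟨hp.1, ih hp.2⟩

theorem size_eq_zero (hb : b.IsReplicative) (hp : b.Reduced p) (h : b * p.bclass = b) :
    p.size = 0 := by
  induction p with
  | nil => rfl
  | pre a p _ => exact absurd h hp.2
  | par p q ihp ihq =>
    rw [bclass_par] at h
    have hp' := ihp hp.1 (hb.mul_eq_self_of_mul_mul_eq_self (by rwa [mul_assoc]))
    have hq' := ihq hp.2 (hb.mul_eq_self_of_mul_mul_eq_self (by rwa [mul_assoc, mul_comm q.bclass]))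
    rw [Proc.size, hp', hq']
  | repl => exact hp.elim

theorem size_le (hb : b.IsReplicative) (hp : b.Reduced p) (hq : q.IsFin)
    (h : b * q.bclass = b * p.bclass * w) : p.size ≤ q.size := by
  induction hn : q.size generalizing p q w with
  | zero =>
    rw [Proc.bclass_eq_one_of_size_eq_zero hn, mul_one] at h
    rw [size_eq_zero hb hp (hb.mul_eq_self_of_mul_mul_eq_self h.symm)]
  | succ n ih =>
    obtain ⟨a, q', hs⟩ := Proc.exists_step_of_size_ne_zero (p := q) (by omega)
    have hsize : q'.size = n := by have := hs.size_eq hq; omega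
    have ih {p w} (hp : b.Reduced p) (h : b * q'.bclass = b * p.bclass * w) : p.size ≤ n :=
      ih hp (hs.isFin hq) h hsize
    rcases step_mul.1 (h ▸ hs.bclass.mul_left b) with ⟨v, hv, heq⟩ | ⟨w', -, heq⟩
    · rcases step_mul.1 hv with ⟨b', hb', rfl⟩ | ⟨x, hx, rfl⟩
      · obtain ⟨k, -, rfl⟩ := hb _ _ hb'
        exact (ih (w := k * w) hp (heq.trans (by ac_rfl))).trans n.le_succ
      · obtain ⟨p', hs', rfl⟩ := step_bclass.1 hx
        have := hs'.size_eq hp.isFin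
        have := ih (hp.of_step hs') heq
        omega
    · exact (ih hp heq).trans n.le_succ

theorem bclass_eq_of_mul_eq_mul (hb : b.IsReplicative) (hp : b.Reduced p) (hq : b.Reduced q)
    (h : b * p.bclass = b * q.bclass) : p.bclass = q.bclass := by
  refine Proc.bclass_eq_iff.2 ⟨fun p q => b.Reduced p ∧ b.Reduced q ∧ b * p.bclass = b * q.bclass,
    ⟨fun p q ⟨hp, hq, h⟩ => ⟨hq, hp, h.symm⟩, ?_⟩, hp, hq, h⟩
  rintro p q ⟨hp, hq, h⟩ a p' hs
  rcases step_mul.1 (h ▸ hs.bclass.mul_left b) with ⟨b', hb', heq⟩ | ⟨x, hx, heq⟩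
  · obtain ⟨k, -, rfl⟩ := hb _ _ hb'
    have hqp' : q.size ≤ p'.size :=
      size_le (w := k) hb hq (hs.isFin hp.isFin) (heq.trans (mul_right_comm _ _ _))
    have hpq : p.size ≤ q.size := size_le (w := 1) hb hp hq.isFin (by rw [h, mul_one])
    have := hs.size_eq hp.isFin
    omega
  · obtain ⟨q', hs', rfl⟩ := step_bclass.1 hx
    exact ⟨q', hs', hp.of_step hs, hq.of_step hs', heq⟩

end BisimClass.Reduced

theorem FCtx.isFin_fill {D : FCtx A} (hD : D.Wf) {p : Proc A} (hp : p.IsFin) :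
    (D.fill p).IsFin := by
  induction D with
  | hole => exact hp
  | pre a D ih => exact ih hD
  | par D q ih => exact ⟨ih hD.1, hD.2⟩

theorem FCtx.size_fill (D : FCtx A) (p : Proc A) :
    (D.fill p).size = (D.fill .nil).size + p.size := by
  induction D with
  | hole => exact (Nat.zero_add _).symm
  | pre a D ih => simp only [FCtx.fill, Proc.size, ih]; omega
  | par D q ih => simp only [FCtx.fill, Proc.size, ih]; omega

theorem Ctx.size_fill (C : Ctx A) (p : Proc A) :
    (C.fill p).size = (C.fill .nil).size + p.size := by
  induction C with
  | ofD D => exact D.size_fill p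
  | repl a D => simp only [Ctx.fill, Proc.size, D.size_fill p]; omega
  | par C q ih => simp only [Ctx.fill, Proc.size, ih]; omega

theorem Proc.IsFin.wf {p : Proc A} (hp : p.IsFin) : p.Wf := by
  induction p with
  | nil => trivial
  | pre => exact hp
  | par p q ihp ihq => exact ⟨ihp hp.1, ihq hp.2⟩
  | repl => exact hp.elim

theorem Ctx.wf_fill {C : Ctx A} (hC : C.Wf) {p : Proc A} (hp : p.IsFin) : (C.fill p).Wf := by
  induction C with
  | ofD D => exact (FCtx.isFin_fill hC hp).wf
  | repl a D => exact FCtx.isFin_fill hC hp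
  | par C q ih => exact ⟨ih hC.1, hC.2⟩

theorem BisimClass.IsReplicative.mul_fill_congr {b : BisimClass A} (hb : b.IsReplicative)
    (D : FCtx A) {p q : Proc A} (h : b * p.bclass = b * q.bclass) :
    b * (D.fill p).bclass = b * (D.fill q).bclass := by
  induction D with
  | hole => exact h
  | pre a D ih => exact hb.mul_pre_congr a ih
  | par D r ih =>
    rw [FCtx.fill, FCtx.fill, bclass_par, bclass_par, ← mul_assoc, ih, mul_assoc]

theorem Proc.IsFin.exists_fill_of_not_reduced {b : BisimClass A} {p : Proc A} (hp : p.IsFin)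
    (h : ¬ b.Reduced p) : ∃ (D : FCtx A) (a : A) (q : Proc A), D.Wf ∧ b.Reduced q ∧
      b * (Proc.pre a q).bclass = b ∧ p.dclass = (D.fill (.pre a q)).dclass := by
  induction p with
  | nil => exact absurd trivial h
  | pre a p ih =>
    by_cases hred : b.Reduced p
    · exact ⟨.hole, a, p, trivial, hred, not_not.1 fun hne => h ⟨hred, hne⟩, rfl⟩
    · obtain ⟨D, c, q, hD, hq, habs, heq⟩ := ih hp hred
      exact ⟨.pre a D, c, q, hD, hq, habs, congrArg (EqDClass.pre a) heq⟩
  | par p r ihp ihr =>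
    by_cases hred : b.Reduced p
    · obtain ⟨D, a, q, hD, hq, habs, heq⟩ := ihr hp.2 fun hr => h ⟨hred, hr⟩
      refine ⟨.par D p, a, q, ⟨hD, hp.1⟩, hq, habs, ?_⟩
      rw [FCtx.fill, EqDClass.dclass_par, EqDClass.dclass_par, heq, mul_comm]
    · obtain ⟨D, a, q, hD, hq, habs, heq⟩ := ihp hp.1 hred
      refine ⟨.par D r, a, q, ⟨hD, hp.2⟩, hq, habs, ?_⟩
      rw [FCtx.fill, EqDClass.dclass_par, EqDClass.dclass_par, heq]
  | repl => exact hp.elim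

/-! ### Normal decompositions -/

namespace EqDClass

/-- The class of `∏ᵢ !αᵢ.hᵢ` for a multiset of pairs `(αᵢ, hᵢ)`. -/
def replProd (s : Multiset (A × EqDClass A)) : EqDClass A := (s.map fun x => repl x.1 x.2).prod

theorem replProd_cons (a : A) (h : EqDClass A) (s : Multiset (A × EqDClass A)) :
    replProd ((a, h) ::ₘ s) = repl a h * replProd s := by
  rw [replProd, Multiset.map_cons, Multiset.prod_cons, replProd]

theorem replProd_add (s t : Multiset (A × EqDClass A)) :
    replProd (s + t) = replProd s * replProd t := by
  rw [replProd, Multiset.map_add, Multiset.prod_add, replProd, replProd]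

theorem step_toBisim_replProd {s : Multiset (A × EqDClass A)} {a : A} {z : BisimClass A} :
    (toBisim (replProd s)).Step a z ↔ ∃ h, (a, h) ∈ s ∧ z = toBisim (replProd s) * toBisim h := by
  induction s using Multiset.induction_on generalizing z with
  | empty =>
    simp only [replProd, Multiset.map_zero, Multiset.prod_zero, map_one, BisimClass.not_step_one,
      Multiset.notMem_zero, false_and, exists_false]
  | cons x s ih =>
    obtain ⟨b, k⟩ := x
    rw [replProd_cons, map_mul, toBisim_repl, BisimClass.step_mul]
    constructor
    · rintro (⟨y, hy, rfl⟩ | ⟨y, hy, rfl⟩)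
      · obtain ⟨rfl, rfl⟩ := BisimClass.step_repl.1 hy
        exact ⟨k, Multiset.mem_cons_self _ _, mul_right_comm _ _ _⟩
      · obtain ⟨h, hs, rfl⟩ := ih.1 hy
        exact ⟨h, Multiset.mem_cons_of_mem hs, (mul_assoc _ _ _).symm⟩
    · rintro ⟨h, hs, rfl⟩
      rcases Multiset.mem_cons.1 hs with heq | hs
      · obtain ⟨rfl, rfl⟩ := Prod.mk.inj heq
        exact Or.inl ⟨_, BisimClass.step_repl.2 ⟨rfl, rfl⟩, mul_right_comm _ _ _⟩
      · exact Or.inr ⟨_, ih.2 ⟨h, hs, rfl⟩, mul_assoc _ _ _⟩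

variable {s t : Multiset (A × EqDClass A)}

theorem isReplicative_toBisim_replProd (hs : ∀ x ∈ s, x.2 ∈ finite A) :
    (toBisim (replProd s)).IsReplicative := by
  intro a z hz
  obtain ⟨h, hmem, rfl⟩ := step_toBisim_replProd.1 hz
  exact ⟨_, ⟨h, hs _ hmem, rfl⟩, rfl⟩

theorem toBisim_replProd_congr
    (hst : ∀ a h, (a, h) ∈ s → ∃ k, (a, k) ∈ t ∧
      toBisim (replProd s) * toBisim h = toBisim (replProd s) * toBisim k)
    (hts : ∀ a k, (a, k) ∈ t → ∃ h, (a, h) ∈ s ∧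
      toBisim (replProd s) * toBisim h = toBisim (replProd s) * toBisim k) :
    toBisim (replProd s) = toBisim (replProd t) := by
  refine BisimClass.eq_of_same_residuals ?_ ?_
  · intro a z hz
    obtain ⟨h, hs, rfl⟩ := step_toBisim_replProd.1 hz
    obtain ⟨k, ht, heq⟩ := hst a h hs
    exact ⟨toBisim k, heq, step_toBisim_replProd.2 ⟨k, ht, rfl⟩⟩
  · intro a z hz
    obtain ⟨k, ht, rfl⟩ := step_toBisim_replProd.1 hz
    obtain ⟨h, hs, heq⟩ := hts a k ht
    exact ⟨toBisim k, rfl, step_toBisim_replProd.2 ⟨h, hs, heq.symm⟩⟩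

theorem toBisim_replProd_cons_self {x : A × EqDClass A} (hx : x ∈ s) :
    toBisim (replProd (x ::ₘ s)) = toBisim (replProd s) :=
  toBisim_replProd_congr
    (fun _ h hs => ⟨h, (Multiset.mem_cons.1 hs).elim (· ▸ hx) id, rfl⟩)
    (fun _ k ht => ⟨k, Multiset.mem_cons_of_mem ht, rfl⟩)

theorem toBisim_replProd_cons_congr {a : A} {h k : EqDClass A}
    (hhk : toBisim (replProd ((a, h) ::ₘ s)) * toBisim h =
      toBisim (replProd ((a, h) ::ₘ s)) * toBisim k) :
    toBisim (replProd ((a, h) ::ₘ s)) = toBisim (replProd ((a, k) ::ₘ s)) := by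
  refine toBisim_replProd_congr (fun c l hl => ?_) (fun c l hl => ?_)
  · rcases Multiset.mem_cons.1 hl with heq | hl
    · obtain ⟨rfl, rfl⟩ := Prod.mk.inj heq
      exact ⟨k, Multiset.mem_cons_self _ _, hhk⟩
    · exact ⟨l, Multiset.mem_cons_of_mem hl, rfl⟩
  · rcases Multiset.mem_cons.1 hl with heq | hl
    · obtain ⟨rfl, rfl⟩ := Prod.mk.inj heq
      exact ⟨h, Multiset.mem_cons_self _ _, hhk⟩
    · exact ⟨l, Multiset.mem_cons_of_mem hl, rfl⟩

end EqDClass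

open EqDClass (toBisim replProd)

/-- `P ≡D ∏ᵢ !αᵢ.hᵢ | f` with finite bodies `hᵢ` and finite remainder `f`. -/
structure Proc.IsDecomposition (p : Proc A) (s : Multiset (A × EqDClass A)) (f : EqDClass A) :
    Prop where
  body_mem : ∀ x ∈ s, x.2 ∈ EqDClass.finite A
  rest_mem : f ∈ EqDClass.finite A
  dclass_eq : p.dclass = replProd s * f

namespace Proc

variable {p q : Proc A} {s t : Multiset (A × EqDClass A)} {f e : EqDClass A}

theorem Wf.exists_isDecomposition (hp : p.Wf) : ∃ s f, p.IsDecomposition s f := by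
  induction p with
  | nil => exact ⟨0, 1, by simp, one_mem _, (one_mul _).symm⟩
  | pre a p => exact ⟨0, _, by simp, ⟨.pre a p, hp, rfl⟩, (one_mul _).symm⟩
  | repl a p =>
    refine ⟨{(a, p.dclass)}, 1, by simpa using IsFin.dclass_mem hp, one_mem _, ?_⟩
    rw [replProd, Multiset.map_singleton, Multiset.prod_singleton, mul_one, EqDClass.dclass_repl]
  | par p q ihp ihq =>
    obtain ⟨s, f, hs⟩ := ihp hp.1
    obtain ⟨t, e, ht⟩ := ihq hp.2
    refine ⟨s + t, f * e, fun x hx => (Multiset.mem_add.1 hx).elim (hs.body_mem x) (ht.body_mem x),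
      mul_mem hs.rest_mem ht.rest_mem, ?_⟩
    rw [EqDClass.dclass_par, hs.dclass_eq, ht.dclass_eq, EqDClass.replProd_add, mul_mul_mul_comm]

theorem exists_wf_dclass_eq (hs : ∀ x ∈ s, x.2 ∈ EqDClass.finite A)
    (hf : f ∈ EqDClass.finite A) : ∃ p : Proc A, p.Wf ∧ p.dclass = replProd s * f := by
  induction s using Multiset.induction_on with
  | empty =>
    obtain ⟨p, hp, rfl⟩ := hf
    exact ⟨p, hp.wf, (one_mul _).symm⟩
  | cons x s ih =>
    obtain ⟨a, h⟩ := x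
    obtain ⟨p, hp, hps⟩ := ih fun x hx => hs x (Multiset.mem_cons_of_mem hx)
    obtain ⟨q, hq, rfl⟩ := hs _ (Multiset.mem_cons_self _ _)
    refine ⟨.par (.repl a q) p, ⟨hq, hp⟩, ?_⟩
    rw [EqDClass.dclass_par, hps, EqDClass.replProd_cons, mul_assoc, EqDClass.dclass_repl]

theorem IsDecomposition.toBisim_replProd_eq (hp : p.IsDecomposition s f)
    (hq : q.IsDecomposition t e) (h : p.bclass = q.bclass) :
    toBisim (replProd s) = toBisim (replProd t) := by
  refine (EqDClass.isReplicative_toBisim_replProd hp.body_mem).eq_of_mul_eq_mul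
    (EqDClass.isReplicative_toBisim_replProd hq.body_mem)
    ⟨f, hp.rest_mem, rfl⟩ ⟨e, hq.rest_mem, rfl⟩ ?_
  rw [← map_mul, ← map_mul, ← hp.dclass_eq, ← hq.dclass_eq, EqDClass.toBisim_dclass, h,
    EqDClass.toBisim_dclass]

end Proc

/-- The `≡D`-classes of the processes reduced with respect to `b`. -/
def BisimClass.reducedClasses (b : BisimClass A) : Set (EqDClass A) :=
  {x | ∃ p, b.Reduced p ∧ p.dclass = x}

theorem BisimClass.IsReplicative.eq_of_mem_reducedClasses {b : BisimClass A}
    (hb : b.IsReplicative) {x y : EqDClass A} (hx : x ∈ b.reducedClasses)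
    (hy : y ∈ b.reducedClasses) (h : b * toBisim x = b * toBisim y) : x = y := by
  obtain ⟨p, hp, rfl⟩ := hx
  obtain ⟨q, hq, rfl⟩ := hy
  exact EqDClass.toBisim_injOn_finite hp.isFin.dclass_mem hq.isFin.dclass_mem
    (hp.bclass_eq_of_mul_eq_mul hb hq h)

/-- `∏ᵢ !αᵢ.hᵢ | f` is normal: no replicated component is repeated, and neither the bodies `hᵢ` nor
`f` contain a prefixed subterm absorbed by `∏ᵢ !αᵢ.hᵢ`. -/
structure IsNormal (s : Multiset (A × EqDClass A)) (f : EqDClass A) : Prop where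
  nodup : s.Nodup
  body_mem : ∀ x ∈ s, x.2 ∈ (toBisim (replProd s)).reducedClasses
  rest_mem : f ∈ (toBisim (replProd s)).reducedClasses

namespace IsNormal

variable {s t : Multiset (A × EqDClass A)} {f e : EqDClass A}

theorem isReplicative (hs : IsNormal s f) : (toBisim (replProd s)).IsReplicative := by
  refine EqDClass.isReplicative_toBisim_replProd fun x hx => ?_
  obtain ⟨p, hp, hpx⟩ := hs.body_mem x hx
  exact hpx ▸ hp.isFin.dclass_mem

theorem mem_of_step (hs : IsNormal s f) {a : A} {h : EqDClass A}
    (hh : h ∈ (toBisim (replProd s)).reducedClasses)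
    (hstep : (toBisim (replProd s)).Step a (toBisim (replProd s) * toBisim h)) : (a, h) ∈ s := by
  obtain ⟨k, hk, heq⟩ := EqDClass.step_toBisim_replProd.1 hstep
  rwa [hs.isReplicative.eq_of_mem_reducedClasses hh (hs.body_mem _ hk) heq]

theorem mem_of_mem (hs : IsNormal s f) (ht : IsNormal t e)
    (hst : toBisim (replProd s) = toBisim (replProd t)) {x : A × EqDClass A} (hx : x ∈ s) :
    x ∈ t :=
  ht.mem_of_step (hst ▸ hs.body_mem x hx)
    (hst ▸ EqDClass.step_toBisim_replProd.2 ⟨x.2, hx, rfl⟩)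

theorem replProd_mul_eq (hs : IsNormal s f) (ht : IsNormal t e)
    (hst : toBisim (replProd s) = toBisim (replProd t))
    (h : toBisim (replProd s * f) = toBisim (replProd t * e)) :
    replProd s * f = replProd t * e := by
  have hmem : s = t := (Multiset.Nodup.ext hs.nodup ht.nodup).2 fun _ =>
    ⟨hs.mem_of_mem ht hst, ht.mem_of_mem hs hst.symm⟩
  subst hmem
  rw [map_mul, map_mul] at h
  rw [hs.isReplicative.eq_of_mem_reducedClasses hs.rest_mem ht.rest_mem h]

end IsNormal

/-! ### Contractions -/

/-- The instances of (B2), and those of (B1) that remove an innermost prefixed subterm absorbed by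
`b`. -/
inductive Contracts (b : BisimClass A) : Proc A → Proc A → Prop
  | dup {a : A} {p q : Proc A} : p.IsFin → q.Wf →
      Contracts b (.par (.repl a p) (.par (.repl a p) q)) (.par (.repl a p) q)
  | absorb {a : A} {p : Proc A} {C : Ctx A} : C.Wf → b.Reduced p →
      b * (Proc.pre a p).bclass = b → Contracts b (C.fill (.pre a p)) (C.fill .nil)

namespace Contracts

variable {b : BisimClass A} {p q : Proc A} {s : Multiset (A × EqDClass A)} {f : EqDClass A}

theorem wf_right (h : Contracts b p q) : q.Wf := by
  cases h with
  | dup hp hq => exact ⟨hp, hq⟩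
  | absorb hC => exact Ctx.wf_fill hC trivial

theorem size_lt (h : Contracts b p q) : q.size < p.size := by
  cases h with
  | dup => simp only [Proc.size]; omega
  | absorb => rw [Ctx.size_fill _ (.pre _ _), Proc.size]; omega

theorem rw_of_isNormal {S : Proc A} (h : Contracts (toBisim (replProd s)) p q) (hS : S.Wf)
    (hs : S.IsDecomposition s f) (hn : IsNormal s f) : Rw S p q := by
  cases h with
  | dup hp hq => exact .B2 hp hq hS
  | @absorb a p C hC hp habs =>
    have hmem : (a, p.dclass) ∈ s :=
      hn.mem_of_step ⟨p, hp, rfl⟩ (BisimClass.step_of_mul_pre_eq_self habs)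
    obtain ⟨u, rfl⟩ := Multiset.exists_cons_of_mem hmem
    obtain ⟨r, hr, hru⟩ := Proc.exists_wf_dclass_eq
      (fun x hx => hs.body_mem x (Multiset.mem_cons_of_mem hx)) hs.rest_mem
    have hSr : EqD S (.par (.repl a p) r) := by
      rw [← Proc.dclass_eq_iff, hs.dclass_eq, EqDClass.replProd_cons, mul_assoc, ← hru,
        EqDClass.dclass_par, EqDClass.dclass_repl]
    exact .eqD hSr (.refl _) (.B1 C hp.isFin hr hC) (.refl _)

theorem exists_of_mem_of_notMem_reducedClasses {x : A × EqDClass A} (hx : x ∈ s)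
    (hs : ∀ x ∈ s, x.2 ∈ EqDClass.finite A) (hf : f ∈ EqDClass.finite A)
    (hred : x.2 ∉ (toBisim (replProd s)).reducedClasses) :
    ∃ p q, Contracts (toBisim (replProd s)) p q ∧ p.dclass = replProd s * f ∧
      p.bclass = q.bclass := by
  have hb := EqDClass.isReplicative_toBisim_replProd hs
  obtain ⟨a, h⟩ := x
  obtain ⟨p, hp, rfl : p.dclass = h⟩ := hs _ hx
  obtain ⟨D, c, q, hD, hq, habs, heq⟩ := hp.exists_fill_of_not_reduced fun h => hred ⟨p, h, rfl⟩
  obtain ⟨u, rfl⟩ := Multiset.exists_cons_of_mem hx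
  obtain ⟨r, hr, hru⟩ := Proc.exists_wf_dclass_eq
    (fun x hx => hs x (Multiset.mem_cons_of_mem hx)) hf
  refine ⟨_, _, .absorb (C := .par (.repl a D) r) ⟨hD, hr⟩ hq habs, ?_, ?_⟩
  · simp only [Ctx.fill, EqDClass.dclass_par, EqDClass.dclass_repl, ← heq, hru,
      EqDClass.replProd_cons, mul_assoc]
  · have hfill := hb.mul_fill_congr D (p := .pre c q) (q := .nil)
      (by rw [habs, BisimClass.bclass_nil, mul_one])
    have hcons := EqDClass.toBisim_replProd_cons_congr (s := u) (a := a) (h := p.dclass)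
      (k := (D.fill .nil).dclass) (by rw [← EqDClass.toBisim_dclass, ← heq] at hfill; exact hfill)
    have := congrArg (· * toBisim f) hcons
    simp only [EqDClass.replProd_cons, heq, ← map_mul, mul_assoc, ← hru] at this
    exact this

theorem exists_of_notMem_reducedClasses (hs : ∀ x ∈ s, x.2 ∈ EqDClass.finite A)
    (hf : f ∈ EqDClass.finite A) (hred : f ∉ (toBisim (replProd s)).reducedClasses) :
    ∃ p q, Contracts (toBisim (replProd s)) p q ∧ p.dclass = replProd s * f ∧
      p.bclass = q.bclass := by
  have hb := EqDClass.isReplicative_toBisim_replProd hs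
  obtain ⟨p, hp, rfl⟩ := hf
  obtain ⟨D, a, q, hD, hq, habs, heq⟩ := hp.exists_fill_of_not_reduced fun h => hred ⟨p, h, rfl⟩
  obtain ⟨r, hr, hrs⟩ := Proc.exists_wf_dclass_eq hs (one_mem _)
  rw [mul_one] at hrs
  refine ⟨_, _, .absorb (C := .par (.ofD D) r) ⟨hD, hr⟩ hq habs, ?_, ?_⟩
  · rw [Ctx.fill, Ctx.fill, EqDClass.dclass_par, hrs, ← heq, mul_comm]
  · have hfill := hb.mul_fill_congr D (p := .pre a q) (q := .nil)
      (by rw [habs, BisimClass.bclass_nil, mul_one])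
    rw [← hrs, EqDClass.toBisim_dclass, mul_comm, mul_comm r.bclass] at hfill
    exact hfill

theorem exists_of_not_nodup (hdup : ¬ s.Nodup) (hs : ∀ x ∈ s, x.2 ∈ EqDClass.finite A)
    (hf : f ∈ EqDClass.finite A) :
    ∃ p q, Contracts b p q ∧ p.dclass = replProd s * f ∧ p.bclass = q.bclass := by
  obtain ⟨⟨a, h⟩, u, rfl⟩ : ∃ x u, s = x ::ₘ x ::ₘ u := by
    simpa only [Multiset.nodup_iff_ne_cons_cons, not_forall, not_not] using hdup
  obtain ⟨p, hp, rfl : p.dclass = h⟩ := hs _ (Multiset.mem_cons_self _ _)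
  obtain ⟨r, hr, hru⟩ := Proc.exists_wf_dclass_eq
    (fun x hx => hs x (Multiset.mem_cons_of_mem (Multiset.mem_cons_of_mem hx))) hf
  refine ⟨_, _, .dup (a := a) hp hr, ?_, ?_⟩
  · simp only [EqDClass.dclass_par, EqDClass.dclass_repl, hru, EqDClass.replProd_cons, mul_assoc]
  · have := congrArg (· * toBisim f)
      (EqDClass.toBisim_replProd_cons_self (Multiset.mem_cons_self (a, p.dclass) u))
    simp only [EqDClass.replProd_cons, ← map_mul, mul_assoc, ← hru] at this
    exact this

theorem exists_of_not_isNormal (hs : ∀ x ∈ s, x.2 ∈ EqDClass.finite A)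
    (hf : f ∈ EqDClass.finite A) (hn : ¬ IsNormal s f) :
    ∃ p q, Contracts (toBisim (replProd s)) p q ∧ p.dclass = replProd s * f ∧
      p.bclass = q.bclass := by
  by_cases hdup : s.Nodup
  · by_cases hbody : ∀ x ∈ s, x.2 ∈ (toBisim (replProd s)).reducedClasses
    · exact exists_of_notMem_reducedClasses hs hf fun hrest => hn ⟨hdup, hbody, hrest⟩
    · push Not at hbody
      obtain ⟨x, hx, hred⟩ := hbody
      exact exists_of_mem_of_notMem_reducedClasses hx hs hf hred
  · exact exists_of_not_nodup hdup hs hf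

end Contracts

theorem IsSeed.isNormal {S : Proc A} (hS : IsSeed S) {s : Multiset (A × EqDClass A)}
    {f : EqDClass A} (hs : S.IsDecomposition s f) : IsNormal s f := by
  by_contra hn
  obtain ⟨p, q, hpq, hp, hbis⟩ := Contracts.exists_of_not_isNormal hs.body_mem hs.rest_mem hn
  have hSp : EqD S p := Proc.dclass_eq_iff.1 (hs.dclass_eq.trans hp.symm)
  have hSq : Bisim q S := Proc.bclass_eq_iff.1 (hbis.symm.trans hSp.bclass_eq.symm)
  have := hS.2 q hpq.wf_right hSq
  have := hpq.size_lt
  have := hSp.size_eq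
  omega

end CCS

open CCS EqDClass in
theorem eqD_or_rw_step_to_seed_general {A : Type} (P S : CCS.Proc A) (hP : P.Wf)
    (hS : CCS.IsSeed S) (hbis : CCS.Bisim P S) :
    CCS.EqD P S ∨ ∃ P', CCS.Rw S P P' ∧ CCS.Bisim P P' := by
  obtain ⟨s, f, hs⟩ := hP.exists_isDecomposition
  obtain ⟨t, e, ht⟩ := hS.1.exists_isDecomposition
  have hPS : P.bclass = S.bclass := Proc.bclass_eq_iff.2 hbis
  have hbase : toBisim (replProd s) = toBisim (replProd t) := hs.toBisim_replProd_eq ht hPS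
  by_cases hn : IsNormal s f
  · refine Or.inl (Proc.dclass_eq_iff.1 ?_)
    rw [hs.dclass_eq, ht.dclass_eq]
    refine hn.replProd_mul_eq (hS.isNormal ht) hbase ?_
    rwa [← hs.dclass_eq, ← ht.dclass_eq]
  · obtain ⟨p, q, hpq, hp, hpqbis⟩ := Contracts.exists_of_not_isNormal hs.body_mem hs.rest_mem hn
    have hPp : EqD P p := Proc.dclass_eq_iff.1 (hs.dclass_eq.trans hp.symm)
    have hrw : Rw S p q := Contracts.rw_of_isNormal (hbase ▸ hpq) hS.1 ht (hS.isNormal ht)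
    exact Or.inr ⟨q, .eqD (.refl S) hPp hrw (.refl q),
      Proc.bclass_eq_iff.1 (hPp.bclass_eq.trans hpqbis)⟩

/-- For every process `P`, either `P ≡D seed(P)`, or `P ⤳_{seed(P)} P'` for
some `P'` with `P ~ P'`. -/
theorem eqD_or_rw_step_to_seed {A : Type} [Countable A]
    (P S : CCS.Proc A) (hP : P.Wf) (hS : CCS.IsSeed S)
    (hbis : CCS.Bisim P S) :
    CCS.EqD P S ∨ ∃ P', CCS.Rw S P P' ∧ CCS.Bisim P P' := by
  exact eqD_or_rw_step_to_seed_general P S hP hS hbis
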